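/- Assume p^2·e_0 − (p+1)·b_2 + (p−1)·b_1 > 0, and let 𝔄_{K_2/K_0} = { α ∈ K_0[G] : α·𝔒_2 ⊆ 𝔒_2 } be the associated order of 𝔒_2. Then 𝔒_2 is free over 𝔄_{K_2/K_0} if and only if w_j = d_j − d_0 for all 0 ≤ j ≤ p^2 − 1; moreover, in that case 𝔒_2 = 𝔄_{K_2/K_0}·ρ_0. -/

import Mathlib

/-- A normalized discrete valuation on a field `K`, recorded as a function
`v : K → ℤ`.  The value of `v` at `0` is irrelevant: all conditions below only
refer to nonzero elements (the convention `v 0 = ∞` being understood). -/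
structure IsDiscVal {K : Type*} [Field K] (v : K → ℤ) : Prop where
  map_one : v 1 = 0
  map_mul : ∀ x y : K, x ≠ 0 → y ≠ 0 → v (x * y) = v x + v y
  min_le_add : ∀ x y : K, x ≠ 0 → y ≠ 0 → x + y ≠ 0 → min (v x) (v y) ≤ v (x + y)
  exists_uniformizer : ∃ π : K, π ≠ 0 ∧ v π = 1

section Scaffold

open Finset

namespace IsDiscVal

section Basic

variable {K : Type*} [Field K] {v : K → ℤ}

theorem map_neg (hv : IsDiscVal v) {x : K} (hx : x ≠ 0) : v (-x) = v x := by
  have h1 : v (-1) + v (-1) = 0 := by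
    rw [← hv.map_mul _ _ (by simp) (by simp)]
    simpa using hv.map_one
  have h2 : v (-x) = v (-1) + v x := by
    rw [← hv.map_mul _ _ (by simp) hx]
    simp
  omega

/-- The fractional ideal of elements of valuation at least `N`. -/
def ideal (hv : IsDiscVal v) (N : ℤ) : AddSubgroup K where
  carrier := {x | x = 0 ∨ N ≤ v x}
  zero_mem' := Or.inl rfl
  add_mem' := by
    rintro x y hx hy
    by_cases hx0 : x = 0
    · simpa [hx0] using hy
    by_cases hy0 : y = 0
    · simpa [hy0] using hx
    by_cases hxy : x + y = 0
    · exact Or.inl hxy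
    · have hx' := hx.resolve_left hx0
      have hy' := hy.resolve_left hy0
      exact Or.inr ((le_min hx' hy').trans (hv.min_le_add x y hx0 hy0 hxy))
  neg_mem' := by
    rintro x hx
    by_cases hx0 : x = 0
    · exact Or.inl (by simp [hx0])
    · exact Or.inr ((hx.resolve_left hx0).trans_eq (hv.map_neg hx0).symm)

theorem ideal_mono (hv : IsDiscVal v) {M N : ℤ} (h : N ≤ M) {x : K} (hx : x ∈ hv.ideal M) :
    x ∈ hv.ideal N :=
  hx.imp id h.trans

theorem mul_mem (hv : IsDiscVal v) {M N : ℤ} {x y : K} (hx : x ∈ hv.ideal M)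
    (hy : y ∈ hv.ideal N) : x * y ∈ hv.ideal (M + N) := by
  by_cases hx0 : x = 0
  · exact Or.inl (by simp [hx0])
  by_cases hy0 : y = 0
  · exact Or.inl (by simp [hy0])
  · refine Or.inr ?_
    rw [hv.map_mul x y hx0 hy0]
    exact add_le_add (hx.resolve_left hx0) (hy.resolve_left hy0)

theorem one_mem (hv : IsDiscVal v) : (1 : K) ∈ hv.ideal 0 :=
  Or.inr hv.map_one.ge

theorem natCast_mem (hv : IsDiscVal v) (k : ℕ) : (k : K) ∈ hv.ideal 0 := by
  induction k with
  | zero => exact Or.inl (by simp)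
  | succ k ih => simpa using add_mem ih hv.one_mem

theorem prod_mem (hv : IsDiscVal v) {M : ℤ} {f : ℕ → K} (k : ℕ)
    (hf : ∀ l < k, f l ∈ hv.ideal M) : ∏ l ∈ range k, f l ∈ hv.ideal (k * M) := by
  induction k with
  | zero => simpa using hv.one_mem
  | succ k ih =>
    rw [prod_range_succ]
    refine hv.ideal_mono (le_of_eq ?_)
      (hv.mul_mem (ih fun l hl => hf l (by omega)) (hf k (by omega)))
    push_cast; ring

theorem pow_mem (hv : IsDiscVal v) {M : ℤ} {x : K} (hx : x ∈ hv.ideal M) (k : ℕ) :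
    x ^ k ∈ hv.ideal (k * M) := by
  simpa using hv.prod_mem (f := fun _ => x) k fun _ _ => hx

end Basic

end IsDiscVal

/-- `x` is nonzero of valuation exactly `N`. -/
def HasVal {K : Type*} [Field K] (v : K → ℤ) (x : K) (N : ℤ) : Prop :=
  x ≠ 0 ∧ v x = N

namespace HasVal

variable {K : Type*} [Field K] {v : K → ℤ} {x y : K} {M N : ℤ}

theorem mem (hx : HasVal v x N) (hv : IsDiscVal v) : x ∈ hv.ideal N :=
  Or.inr hx.2.ge

theorem notMem (hx : HasVal v x N) (hv : IsDiscVal v) (h : N < M) : x ∉ hv.ideal M := by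
  rintro (h0 | h1)
  · exact hx.1 h0
  · have := hx.2
    omega

theorem le_of_mem (hx : HasVal v x N) (hv : IsDiscVal v) (h : x ∈ hv.ideal M) : M ≤ N := by
  by_contra! hlt
  exact hx.notMem hv hlt h

theorem congr (hx : HasVal v x N) (h : N = M) : HasVal v x M :=
  h ▸ hx

theorem mul (hx : HasVal v x M) (hy : HasVal v y N) (hv : IsDiscVal v) :
    HasVal v (x * y) (M + N) :=
  ⟨mul_ne_zero hx.1 hy.1, by rw [hv.map_mul _ _ hx.1 hy.1, hx.2, hy.2]⟩

theorem one (hv : IsDiscVal v) : HasVal v 1 0 :=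
  ⟨one_ne_zero, hv.map_one⟩

theorem neg (hx : HasVal v x N) (hv : IsDiscVal v) : HasVal v (-x) N :=
  ⟨neg_ne_zero.2 hx.1, by rw [hv.map_neg hx.1, hx.2]⟩

theorem prod (hv : IsDiscVal v) {f : ℕ → K} (k : ℕ) (hf : ∀ l < k, HasVal v (f l) M) :
    HasVal v (∏ l ∈ range k, f l) (k * M) := by
  induction k with
  | zero => simpa using one hv
  | succ k ih =>
    rw [prod_range_succ]
    refine ((ih fun l hl => hf l (by omega)).mul (hf k (by omega)) hv).congr ?_
    push_cast; ring

theorem pow (hx : HasVal v x M) (hv : IsDiscVal v) (k : ℕ) : HasVal v (x ^ k) (k * M) := by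
  simpa using prod hv (f := fun _ => x) k fun _ _ => hx

theorem inv (hx : HasVal v x N) (hv : IsDiscVal v) : HasVal v x⁻¹ (-N) := by
  have h0 := inv_ne_zero hx.1
  refine ⟨h0, ?_⟩
  have := hv.map_mul x x⁻¹ hx.1 h0
  rw [mul_inv_cancel₀ hx.1, hv.map_one, hx.2] at this
  omega

theorem zpow (hx : HasVal v x M) (hv : IsDiscVal v) (k : ℤ) : HasVal v (x ^ k) (k * M) := by
  obtain ⟨k, rfl | rfl⟩ := k.eq_nat_or_neg
  · simpa using hx.pow hv k
  · simpa using (hx.pow hv k).inv hv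

theorem add_mem (hx : HasVal v x N) (hv : IsDiscVal v) (hy : y ∈ hv.ideal M) (h : N < M) :
    HasVal v (x + y) N := by
  have h0 : x + y ≠ 0 := by
    intro h0
    have hxy : x = -y := eq_neg_of_add_eq_zero_left h0
    exact hx.notMem hv h (hxy ▸ neg_mem hy)
  refine ⟨h0, le_antisymm ?_ ?_⟩
  · by_contra! hlt
    have h1 : x + y ∈ hv.ideal (N + 1) := Or.inr hlt
    have h2 : x ∈ hv.ideal (N + 1) := by
      simpa using sub_mem h1 (hv.ideal_mono h hy)
    exact hx.notMem hv (by omega) h2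
  · have h1 : x + y ∈ hv.ideal N := AddMemClass.add_mem (hx.mem hv) (hv.ideal_mono h.le hy)
    exact h1.resolve_left h0

theorem sub_mem (hx : HasVal v x N) (hv : IsDiscVal v) (hy : y ∈ hv.ideal M) (h : N < M) :
    HasVal v (x - y) N := by
  simpa [sub_eq_add_neg] using hx.add_mem hv (neg_mem hy) h

end HasVal

theorem IsDiscVal.hasVal_or_zero {K : Type*} [Field K] (v : K → ℤ) (x : K) :
    x = 0 ∨ HasVal v x (v x) := by
  by_cases h : x = 0
  · exact Or.inl h
  · exact Or.inr ⟨h, rfl⟩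

namespace IsDiscVal

section Sum

variable {K : Type*} [Field K] {v : K → ℤ}

/-- A sum of terms with pairwise distinct valuations has no cancellation. -/
theorem mem_of_sum_mem (hv : IsDiscVal v) {ι : Type*} {s : Finset ι} {f : ι → K}
    (hf : ∀ i ∈ s, ∀ j ∈ s, f i ≠ 0 → f j ≠ 0 → v (f i) = v (f j) → i = j) {N : ℤ}
    (hs : ∑ i ∈ s, f i ∈ hv.ideal N) {i : ι} (hi : i ∈ s) : f i ∈ hv.ideal N := by
  classical
  by_contra hcon
  set t := s.filter fun i => f i ∉ hv.ideal N with ht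
  have hne : t.Nonempty := ⟨i, by simp [ht, hi, hcon]⟩
  obtain ⟨k, hk, hmin⟩ := t.exists_min_image (fun i => v (f i)) hne
  have hks : k ∈ s := (mem_filter.1 hk).1
  have hkN : f k ∉ hv.ideal N := (mem_filter.1 hk).2
  have hk0 : f k ≠ 0 := fun h => hkN (Or.inl h)
  have hlt : v (f k) < N := by
    by_contra! h
    exact hkN (Or.inr h)
  have hrest : ∑ i ∈ s.erase k, f i ∈ hv.ideal (v (f k) + 1) := by
    refine sum_mem fun j hj => ?_
    obtain ⟨hjk, hjs⟩ := mem_erase.1 hj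
    by_cases hj0 : f j = 0
    · exact Or.inl hj0
    have hne' : v (f k) ≠ v (f j) := fun h => hjk (hf k hks j hjs hk0 hj0 h).symm
    by_cases hjt : f j ∈ hv.ideal N
    · exact hv.ideal_mono hlt hjt
    · have := hmin j (mem_filter.2 ⟨hjs, hjt⟩)
      exact Or.inr (by omega)
  have hval : HasVal v (∑ i ∈ s, f i) (v (f k)) := by
    rw [← add_sum_erase s f hks]
    exact HasVal.add_mem ⟨hk0, rfl⟩ hv hrest (by omega)
  exact hval.notMem hv hlt hs

end Sum

section ResidueChar

variable {K : Type*} [Field K] {v : K → ℤ} {p : ℕ} {e : ℤ}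

theorem hasVal_natCast (hv : IsDiscVal v) (hp : p.Prime) (he : HasVal v (p : K) e) (he1 : 1 ≤ e)
    {k : ℕ} (hk0 : k ≠ 0) (hk : k < p) : HasVal v (k : K) 0 := by
  have hcop : IsCoprime (k : ℤ) (p : ℤ) :=
    Nat.isCoprime_iff_coprime.2
      (Nat.coprime_comm.1 (hp.coprime_iff_not_dvd.2 (Nat.not_dvd_of_pos_of_lt (by omega) hk)))
  have hcast : ∀ a : ℤ, (a : K) ∈ hv.ideal 0 := fun a => by
    obtain ⟨a, rfl | rfl⟩ := a.eq_nat_or_neg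
    · simpa using hv.natCast_mem a
    · simpa using neg_mem (hv.natCast_mem a)
  obtain ⟨a, b, hab⟩ := hcop
  have hab' : (a : K) * k + b * p = 1 := by exact_mod_cast congrArg (Int.cast : ℤ → K) hab
  have h1 : (1 : K) - b * p = a * k := by rw [← hab']; ring
  have h2 : HasVal v ((a : K) * k) 0 := by
    rw [← h1]
    exact (HasVal.one hv).sub_mem hv (hv.mul_mem (hcast b) (he.mem hv)) (by omega)
  rcases IsDiscVal.hasVal_or_zero v (k : K) with h | h
  · exact absurd (by simp [h]) h2.1
  · refine h.congr (le_antisymm ?_ (h.le_of_mem hv (hv.natCast_mem k)))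
    have := h2.le_of_mem hv (hv.mul_mem (hcast a) (h.mem hv))
    omega

theorem hasVal_factorial (hv : IsDiscVal v) (hp : p.Prime) (he : HasVal v (p : K) e)
    (he1 : 1 ≤ e) {k : ℕ} (hk : k < p) : HasVal v (k.factorial : K) 0 := by
  induction k with
  | zero => simpa using HasVal.one hv
  | succ k ih =>
    rw [Nat.factorial_succ, Nat.cast_mul]
    simpa using (hv.hasVal_natCast hp he he1 (Nat.succ_ne_zero k) hk).mul (ih (by omega)) hv

/-- The `p`-th power map is additive up to `p` times mixed terms. -/
theorem exists_add_pow_prime (hv : IsDiscVal v) (hp : p.Prime) {x y : K} {a b M : ℤ}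
    (hx : x ∈ hv.ideal a) (hy : y ∈ hv.ideal b) (h1 : M ≤ (p - 1) * a + b)
    (h2 : M ≤ a + (p - 1) * b) :
    ∃ R ∈ hv.ideal M, (x + y) ^ p = x ^ p + y ^ p + p * R := by
  refine ⟨∑ k ∈ Ioo 0 p, x ^ k * y ^ (p - k) * ((p.choose k / p : ℕ) : K), ?_, ?_⟩
  · refine sum_mem fun k hk => ?_
    obtain ⟨hk0, hkp⟩ := mem_Ioo.1 hk
    refine hv.ideal_mono ?_ (hv.mul_mem (hv.mul_mem (hv.pow_mem hx k) (hv.pow_mem hy (p - k)))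
      (hv.natCast_mem _))
    push_cast [hkp.le]
    have hk0' : (1 : ℤ) ≤ k := by exact_mod_cast hk0
    have hkp' : (k : ℤ) + 1 ≤ p := by exact_mod_cast hkp
    rcases le_total a b with hab | hab <;> nlinarith
  · rw [add_pow_prime_eq hp, mul_assoc, mul_assoc, mul_sum, mul_sum]
    congr 2
    refine sum_congr rfl fun k hk => ?_
    obtain ⟨hk0, hkp⟩ := mem_Ioo.1 hk
    obtain ⟨k, rfl⟩ : ∃ l, k = l + 1 := ⟨k - 1, by omega⟩
    obtain ⟨l, rfl⟩ : ∃ l, p = k + 1 + l + 1 := ⟨p - k - 2, by omega⟩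
    have e1 : k + 1 + l + 1 - (k + 1) - 1 = l := by omega
    have e2 : k + 1 + l + 1 - (k + 1) = l + 1 := by omega
    rw [e1, e2]
    simp only [Nat.add_sub_cancel]
    ring

/-- Valuation of a root of an Artin–Schreier equation with a pole on the right. -/
theorem hasVal_of_artinSchreier (hv : IsDiscVal v) (hp : p.Prime) {x A : K} {N : ℤ} (hN : 1 ≤ N)
    (hA : HasVal v A (-(p * N))) (hx : x ^ p - x = A) : HasVal v x (-N) := by
  have hp2 : (2 : ℤ) ≤ p := by exact_mod_cast hp.two_le
  rcases IsDiscVal.hasVal_or_zero v x with h | h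
  · exact absurd (by rw [← hx, h]; simp [hp.ne_zero]) hA.1
  set s := v x
  rcases lt_or_ge s 0 with hs | hs
  · have h1 : HasVal v (x ^ p - x) (p * s) := (h.pow hv p).sub_mem hv (h.mem hv) (by nlinarith)
    rw [hx] at h1
    have h2 : (p : ℤ) * s = -(p * N) := h1.2.symm.trans hA.2
    refine h.congr ?_
    have : (p : ℤ) * (s + N) = 0 := by linarith
    rcases mul_eq_zero.1 this with h' | h' <;> omega
  · exfalso
    have h1 : x ^ p - x ∈ hv.ideal 0 :=
      sub_mem (hv.ideal_mono (by positivity) (hv.pow_mem (h.mem hv) p))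
        (hv.ideal_mono hs (h.mem hv))
    rw [hx] at h1
    have := hA.le_of_mem hv h1
    nlinarith

end ResidueChar

end IsDiscVal

/-- The generalized binomial coefficient `x (x - 1) ⋯ (x - k + 1) / k!`. -/
def binom {K : Type*} [Field K] (x : K) (k : ℕ) : K :=
  (∏ l ∈ range k, (x - (l : K))) / (Nat.factorial k : K)

section Binom

variable {K : Type*} [Field K]

@[simp] theorem binom_zero_right (x : K) : binom x 0 = 1 := by simp [binom]

@[simp] theorem binom_one_right (x : K) : binom x 1 = x := by simp [binom]

theorem map_binom {L : Type*} [Field L] (f : K →+* L) (x : K) (k : ℕ) :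
    f (binom x k) = binom (f x) k := by
  simp [binom, map_prod]

theorem binom_eq_choose [CharZero K] (x : K) (k : ℕ) : binom x k = Ring.choose x k := by
  rw [Ring.choose_eq_smul, binom, ← Polynomial.aeval_eq_smeval, Polynomial.aeval_def,
    Polynomial.eval₂_eq_eval_map, descPochhammer_map, descPochhammer_eval_eq_prod_range,
    div_eq_inv_mul, smul_eq_mul]

theorem binom_add [CharZero K] (x y : K) (k : ℕ) :
    binom (x + y) k = ∑ i ∈ range (k + 1), binom y i * binom x (k - i) := by
  simp only [binom_eq_choose]
  rw [add_comm, Ring.add_choose_eq k (Commute.all y x),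
    Nat.sum_antidiagonal_eq_sum_range_succ fun i j => Ring.choose y i * Ring.choose x j]

variable {v : K → ℤ} {p : ℕ} {e : ℤ}

theorem IsDiscVal.binom_mem (hv : IsDiscVal v) (hp : p.Prime) (he : HasVal v (p : K) e)
    (he1 : 1 ≤ e) {x : K} {N : ℤ} (hN : 0 ≤ N) (hx : x ∈ hv.ideal (-N)) {k : ℕ} (hk : k < p) :
    binom x k ∈ hv.ideal (-(k * N)) := by
  rw [binom, div_eq_mul_inv]
  have h1 := hv.prod_mem (f := fun l => x - (l : K)) (M := -N) k fun l _ =>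
    sub_mem hx (hv.ideal_mono (by omega) (hv.natCast_mem l))
  have h2 := ((hv.hasVal_factorial hp he he1 hk).inv hv).mem hv
  exact hv.ideal_mono (by simp) (hv.mul_mem h1 h2)

theorem HasVal.binom (hv : IsDiscVal v) (hp : p.Prime) (he : HasVal v (p : K) e)
    (he1 : 1 ≤ e) {x : K} {N : ℤ} (hN : 1 ≤ N) (hx : HasVal v x (-N)) {k : ℕ} (hk : k < p) :
    HasVal v (binom x k) (-(k * N)) := by
  rw [_root_.binom, div_eq_mul_inv]
  have h1 := HasVal.prod hv (f := fun l => x - (l : K)) (M := -N) k fun l _ =>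
    hx.sub_mem hv (hv.natCast_mem l) (by omega)
  have h2 := (hv.hasVal_factorial hp he he1 hk).inv hv
  exact (h1.mul h2 hv).congr (by simp)

/-- The coefficients `binom t k`, `k ≥ 2`, are small when `t` is close to `1`. -/
theorem IsDiscVal.binom_mem_of_sub_one_mem (hv : IsDiscVal v) (hp : p.Prime)
    (he : HasVal v (p : K) e) (he1 : 1 ≤ e) {t : K} {B : ℤ} (hB : 0 ≤ B)
    (ht : t - 1 ∈ hv.ideal B) {k : ℕ} (hk2 : 2 ≤ k) (hk : k < p) :
    _root_.binom t k ∈ hv.ideal B := by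
  obtain ⟨k, rfl⟩ : ∃ l, k = l + 2 := ⟨k - 2, by omega⟩
  have ht0 : t ∈ hv.ideal 0 := by
    simpa using add_mem (hv.ideal_mono hB ht) hv.one_mem
  rw [_root_.binom, div_eq_mul_inv, prod_range_succ', prod_range_succ']
  have h1 := hv.prod_mem (f := fun l => t - ((l + 1 + 1 : ℕ) : K)) (M := 0) k fun l _ =>
    sub_mem ht0 (hv.natCast_mem _)
  have h2 := ((hv.hasVal_factorial hp he he1 hk).inv hv).mem hv
  have h3 : t - ((0 + 1 : ℕ) : K) ∈ hv.ideal B := by simpa using ht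
  have h4 : t - ((0 : ℕ) : K) ∈ hv.ideal 0 := by simpa using ht0
  exact hv.ideal_mono (by simp) (hv.mul_mem (hv.mul_mem (hv.mul_mem h1 h3) h4) h2)

/-- A translate of a binomial coefficient differs from it by a small element. -/
theorem IsDiscVal.binom_add_sub_mem [CharZero K] (hv : IsDiscVal v) (hp : p.Prime)
    (he : HasVal v (p : K) e) (he1 : 1 ≤ e) {x g : K} {N G : ℤ} (hG : 0 ≤ G) (hGN : G ≤ N)
    (hx : x ∈ hv.ideal (-N)) (hg : g ∈ hv.ideal (-G)) {k : ℕ} (hk : k < p) :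
    _root_.binom (x + g) k - _root_.binom x k ∈ hv.ideal (N - G - k * N) := by
  rw [binom_add, sum_range_succ', binom_zero_right, one_mul, Nat.sub_zero, add_sub_cancel_right]
  refine sum_mem fun i hi => ?_
  rw [mem_range] at hi
  refine hv.ideal_mono ?_ (hv.mul_mem (hv.binom_mem hp he he1 hG hg (by omega : i + 1 < p))
    (hv.binom_mem hp he he1 (hG.trans hGN) hx (by omega : k - (i + 1) < p)))
  rw [Nat.cast_sub (by omega)]
  push_cast
  nlinarith

/-- The leading term of the difference of two translates of a binomial coefficient. -/
theorem HasVal.binom_add_sub [CharZero K] (hv : IsDiscVal v) (hp : p.Prime)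
    (he : HasVal v (p : K) e) (he1 : 1 ≤ e) {x h : K} {N : ℤ} (hN : 1 ≤ N)
    (hx : HasVal v x (-N)) (hh : HasVal v h 0) {k : ℕ} (hk0 : k ≠ 0) (hk : k < p) :
    HasVal v (_root_.binom (x + h) k - _root_.binom x k) (-(k * N) + N) := by
  obtain ⟨k, rfl⟩ : ∃ l, k = l + 1 := ⟨k - 1, by omega⟩
  rw [binom_add, sum_range_succ', binom_zero_right, one_mul, Nat.sub_zero, add_sub_cancel_right,
    sum_range_succ', add_comm, zero_add, binom_one_right, Nat.add_sub_cancel]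
  have h1 := hh.mul (HasVal.binom hv hp he he1 hN hx (by omega : k < p)) hv
  refine (h1.add_mem hv (M := -(k * N) + N) (sum_mem fun i hi => ?_) (by omega)).congr
    (by push_cast; ring)
  rw [mem_range] at hi
  have h2 := hv.mul_mem
    (hv.binom_mem hp he he1 le_rfl (by simpa using hh.mem hv) (by omega : i + 1 + 1 < p))
    (hv.binom_mem hp he he1 (by omega) (hx.mem hv) (by omega : k + 1 - (i + 1 + 1) < p))
  refine hv.ideal_mono ?_ h2
  rw [Nat.cast_sub (by omega)]
  push_cast
  nlinarith

/-- Translating by an element close to `1` acts on binomial coefficients almost as a difference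
operator. -/
theorem IsDiscVal.binom_add_sub_sub_mem [CharZero K] (hv : IsDiscVal v) (hp : p.Prime)
    (he : HasVal v (p : K) e) (he1 : 1 ≤ e) {x t : K} {N B : ℤ} (hN : 0 ≤ N) (hB : 0 ≤ B)
    (hx : x ∈ hv.ideal (-N)) (ht : t - 1 ∈ hv.ideal B) {k : ℕ} (hk : k + 1 < p) :
    _root_.binom (x + t) (k + 1) - _root_.binom x (k + 1) - _root_.binom x k
      ∈ hv.ideal (B - k * N) := by
  rw [binom_add, sum_range_succ', binom_zero_right, one_mul, Nat.sub_zero, add_sub_cancel_right,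
    sum_range_succ', zero_add, binom_one_right, Nat.add_sub_cancel, add_sub_assoc,
    show t * _root_.binom x k - _root_.binom x k = (t - 1) * _root_.binom x k by ring]
  refine add_mem (sum_mem fun i hi => ?_)
    (hv.ideal_mono (by omega) (hv.mul_mem ht (hv.binom_mem hp he he1 hN hx (by omega : k < p))))
  rw [mem_range] at hi
  have h2 := hv.mul_mem
    (hv.binom_mem_of_sub_one_mem hp he he1 hB ht (by omega : 2 ≤ i + 1 + 1) (by omega))
    (hv.binom_mem hp he he1 hN hx (by omega : k + 1 - (i + 1 + 1) < p))
  refine hv.ideal_mono ?_ h2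
  rw [Nat.cast_sub (by omega)]
  push_cast
  nlinarith

end Binom

section Ramified

variable {K0 K2 : Type*} [Field K0] [Field K2] [Algebra K0 K2] {v0 : K0 → ℤ} {v2 : K2 → ℤ} {n : ℕ}

/-- `v2` restricts to `n * v0` on `K0`. -/
def RamIndex (n : ℕ) (v0 : K0 → ℤ) (v2 : K2 → ℤ) : Prop :=
  ∀ x : K0, x ≠ 0 → v2 (algebraMap K0 K2 x) = (n : ℤ) * v0 x

theorem HasVal.algebraMap (hr : RamIndex n v0 v2) {c : K0} {M : ℤ} (hc : HasVal v0 c M) :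
    HasVal v2 (algebraMap K0 K2 c) (n * M) :=
  ⟨by simpa using hc.1, by rw [hr c hc.1, hc.2]⟩

theorem HasVal.smul (hv2 : IsDiscVal v2) (hr : RamIndex n v0 v2) {c : K0} {z : K2} {M N : ℤ}
    (hc : HasVal v0 c M) (hz : HasVal v2 z N) : HasVal v2 (c • z) (n * M + N) := by
  rw [Algebra.smul_def]
  exact (hc.algebraMap hr).mul hz hv2

theorem IsDiscVal.algebraMap_mem (hv0 : IsDiscVal v0) (hv2 : IsDiscVal v2)
    (hr : RamIndex n v0 v2) {c : K0} {M : ℤ} (hc : c ∈ hv0.ideal M) :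
    algebraMap K0 K2 c ∈ hv2.ideal (n * M) := by
  rcases IsDiscVal.hasVal_or_zero v0 c with h | h
  · exact Or.inl (by simp [h])
  · refine hv2.ideal_mono ?_ ((h.algebraMap hr).mem hv2)
    exact mul_le_mul_of_nonneg_left (h.le_of_mem hv0 hc) (by positivity)

theorem IsDiscVal.smul_mem (hv0 : IsDiscVal v0) (hv2 : IsDiscVal v2) (hr : RamIndex n v0 v2)
    {c : K0} {z : K2} {M N : ℤ} (hc : c ∈ hv0.ideal M) (hz : z ∈ hv2.ideal N) :
    c • z ∈ hv2.ideal (n * M + N) := by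
  rw [Algebra.smul_def]
  exact hv2.mul_mem (hv0.algebraMap_mem hv2 hr hc) hz

theorem HasVal.mem_of_smul_mem (hv0 : IsDiscVal v0) (hv2 : IsDiscVal v2) (hr : RamIndex n v0 v2)
    {c : K0} {z : K2} {k M N : ℤ} (hz : HasVal v2 z N) (hcz : c • z ∈ hv2.ideal M)
    (hk : n * (k - 1) + N < M) : c ∈ hv0.ideal k := by
  rcases IsDiscVal.hasVal_or_zero v0 c with h | h
  · exact Or.inl h
  · refine Or.inr ?_
    have := (HasVal.smul hv2 hr h hz).le_of_mem hv2 hcz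
    by_contra! hlt
    have : (n : ℤ) * v0 c ≤ n * (k - 1) :=
      mul_le_mul_of_nonneg_left (by omega) (by positivity)
    omega

/-- Elements with valuations distinct modulo the ramification index are orthogonal. -/
theorem IsDiscVal.smul_mem_of_sum_mem (hv2 : IsDiscVal v2) (hr : RamIndex n v0 v2) {ι : Type*}
    {s : Finset ι} {B : ι → K2} {val : ι → ℤ} (hB : ∀ i ∈ s, HasVal v2 (B i) (val i))
    (hinj : ∀ i ∈ s, ∀ j ∈ s, (n : ℤ) ∣ val i - val j → i = j) {c : ι → K0} {M : ℤ}
    (h : ∑ i ∈ s, c i • B i ∈ hv2.ideal M) {i : ι} (hi : i ∈ s) : c i • B i ∈ hv2.ideal M := by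
  refine hv2.mem_of_sum_mem (f := fun i => c i • B i) (fun i hi j hj hi0 hj0 hij => ?_) h hi
  have h1 := HasVal.smul hv2 hr ⟨(smul_ne_zero_iff.1 hi0).1, rfl⟩ (hB i hi)
  have h2 := HasVal.smul hv2 hr ⟨(smul_ne_zero_iff.1 hj0).1, rfl⟩ (hB j hj)
  rw [h1.2, h2.2] at hij
  exact hinj i hi j hj ⟨v0 (c j) - v0 (c i), by linarith⟩

theorem IsDiscVal.linearIndependent_of_val (hv2 : IsDiscVal v2) (hr : RamIndex n v0 v2)
    {ι : Type*} [Fintype ι] {B : ι → K2} {val : ι → ℤ} (hB : ∀ i, HasVal v2 (B i) (val i))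
    (hinj : ∀ i j, (n : ℤ) ∣ val i - val j → i = j) : LinearIndependent K0 B := by
  rw [Fintype.linearIndependent_iff]
  intro c hc i
  by_contra hi
  have h1 := HasVal.smul hv2 hr ⟨hi, rfl⟩ (hB i)
  refine h1.notMem hv2 (lt_add_one _) (hv2.smul_mem_of_sum_mem hr (s := univ) (fun i _ => hB i)
    (fun i _ j _ => hinj i j) ?_ (mem_univ i))
  exact Or.inl hc

theorem IsDiscVal.exists_repr (hv2 : IsDiscVal v2) (hr : RamIndex n v0 v2)
    [FiniteDimensional K0 K2] (hdeg : Module.finrank K0 K2 = n)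
    {ι : Type*} [Fintype ι] (hι : Fintype.card ι = n) {B : ι → K2} {val : ι → ℤ}
    (hB : ∀ i, HasVal v2 (B i) (val i)) (hinj : ∀ i j, (n : ℤ) ∣ val i - val j → i = j)
    (z : K2) : ∃ c : ι → K0, ∑ i, c i • B i = z := by
  have h1 := hv2.linearIndependent_of_val hr hB hinj
  have h2 := h1.span_eq_top_of_card_eq_finrank' (hι.trans hdeg.symm)
  have hz : z ∈ Submodule.span K0 (Set.range B) := h2 ▸ Submodule.mem_top
  exact (Submodule.mem_span_range_iff_exists_fun K0).1 hz

/-- The valuation ring of a normalized discrete valuation. -/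
def IsDiscVal.ring {K : Type*} [Field K] {v : K → ℤ} (hv : IsDiscVal v) : ValuationSubring K where
  carrier := hv.ideal 0
  zero_mem' := (hv.ideal 0).zero_mem
  one_mem' := hv.one_mem
  add_mem' := (hv.ideal 0).add_mem
  neg_mem' := (hv.ideal 0).neg_mem
  mul_mem' := fun hx hy => by simpa using hv.mul_mem hx hy
  mem_or_inv_mem' := fun x => by
    rcases IsDiscVal.hasVal_or_zero v x with h | h
    · exact Or.inl (Or.inl h)
    · rcases le_total 0 (v x) with h' | h'
      · exact Or.inl (Or.inr h')
      · exact Or.inr (hv.ideal_mono (by omega) ((h.inv hv).mem hv))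

theorem IsDiscVal.mem_ring {K : Type*} [Field K] {v : K → ℤ} (hv : IsDiscVal v) {x : K} :
    x ∈ hv.ring ↔ x ∈ hv.ideal 0 :=
  Iff.rfl

/-- An element of nonnegative valuation in a totally ramified extension is integral. -/
theorem IsDiscVal.isIntegral_of_mem (hv0 : IsDiscVal v0) (hv2 : IsDiscVal v2)
    (hr : RamIndex n v0 v2) [FiniteDimensional K0 K2] (hdeg : Module.finrank K0 K2 = n) {z : K2}
    (hz : z ∈ hv2.ideal 0) : IsIntegral hv0.ring z := by
  classical
  obtain ⟨P, hP0, hP1⟩ := hv2.exists_uniformizer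
  have hB : ∀ i : Fin n, HasVal v2 (P ^ (i : ℕ)) (i : ℕ) := fun i =>
    ((show HasVal v2 P 1 from ⟨hP0, hP1⟩).pow hv2 i).congr (mul_one _)
  have hinj : ∀ i j : Fin n, (n : ℤ) ∣ ((i : ℕ) : ℤ) - ((j : ℕ) : ℤ) → i = j := by
    intro i j h
    have := Int.eq_zero_of_abs_lt_dvd h (by rw [abs_lt]; omega)
    exact Fin.ext (by omega)
  let N : Submodule hv0.ring K2 :=
    { carrier := hv2.ideal 0
      zero_mem' := (hv2.ideal 0).zero_mem
      add_mem' := (hv2.ideal 0).add_mem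
      smul_mem' := fun c x hx => by
        have h := hv0.smul_mem hv2 hr (hv0.mem_ring.1 c.2) hx
        rw [mul_zero, add_zero] at h
        exact h }
  refine isIntegral_of_smul_mem_submodule N ?_ ?_ z ?_
  · intro h
    have h1 : (1 : K2) ∈ N := hv2.one_mem
    rw [h] at h1
    exact one_ne_zero h1
  · refine ⟨univ.image fun i : Fin n => P ^ (i : ℕ), le_antisymm ?_ ?_⟩
    · rw [Submodule.span_le]
      rintro _ hx
      obtain ⟨i, -, rfl⟩ := mem_image.1 (mem_coe.1 hx)
      exact hv2.ideal_mono (by positivity) ((hB i).mem hv2)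
    · intro x hx
      obtain ⟨c, rfl⟩ := hv2.exists_repr hr hdeg (Fintype.card_fin n) hB hinj x
      refine sum_mem fun i _ => ?_
      have h1 := hv2.smul_mem_of_sum_mem hr (fun i _ => hB i) (fun i _ j _ => hinj i j) hx
        (mem_univ i)
      have h2 : c i ∈ hv0.ring :=
        HasVal.mem_of_smul_mem hv0 hv2 hr (hB i) h1 (by have := i.2; push_cast; omega)
      exact Submodule.smul_mem _ (⟨c i, h2⟩ : hv0.ring)
        (Submodule.subset_span (by simp))
  · intro x hx
    have h := hv2.mul_mem hz hx
    rw [add_zero] at h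
    exact h

theorem IsDiscVal.mem_of_isIntegral (hv0 : IsDiscVal v0) (hv2 : IsDiscVal v2)
    (hr : RamIndex n v0 v2) {z : K2} (hz : IsIntegral hv0.ring z) : z ∈ hv2.ideal 0 := by
  obtain ⟨f, hf, hfz⟩ := hz
  rcases IsDiscVal.hasVal_or_zero v2 z with h | h
  · exact Or.inl h
  by_contra hcon
  have hneg : v2 z < 0 := by
    by_contra! h'
    exact hcon (Or.inr h')
  rw [Polynomial.eval₂_eq_sum_range, sum_range_succ, hf.coeff_natDegree, _root_.map_one,
    one_mul] at hfz
  have h1 : ∑ i ∈ range f.natDegree, algebraMap hv0.ring K2 (f.coeff i) * z ^ i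
      ∈ hv2.ideal (f.natDegree * v2 z + 1) := by
    refine sum_mem fun i hi => ?_
    rw [mem_range] at hi
    have h2 : algebraMap hv0.ring K2 (f.coeff i) ∈ hv2.ideal 0 := by
      have h2 := hv0.algebraMap_mem hv2 hr (hv0.mem_ring.1 (f.coeff i).2)
      rw [mul_zero] at h2
      exact h2
    refine hv2.ideal_mono ?_ (hv2.mul_mem h2 (hv2.pow_mem (h.mem hv2) i))
    have : (i : ℤ) + 1 ≤ f.natDegree := by exact_mod_cast hi
    nlinarith
  have h3 := (h.pow hv2 f.natDegree).add_mem hv2 h1 (lt_add_one _)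
  exact h3.1 (by rw [add_comm]; exact hfz)

/-- Automorphisms of a totally ramified extension preserve the valuation filtration. -/
theorem IsDiscVal.map_mem (hv0 : IsDiscVal v0) (hv2 : IsDiscVal v2)
    (hr : RamIndex n v0 v2) [FiniteDimensional K0 K2] (hdeg : Module.finrank K0 K2 = n)
    (σ : K2 ≃ₐ[K0] K2) {z : K2} {N : ℤ} (hz : z ∈ hv2.ideal N) : σ z ∈ hv2.ideal N := by
  rcases IsDiscVal.hasVal_or_zero v2 z with h | h
  · exact Or.inl (by simp [h])
  refine hv2.ideal_mono (h.le_of_mem hv2 hz) ?_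
  have hn : (0 : ℤ) < n := by
    rw [← hdeg]
    exact_mod_cast Module.finrank_pos
  obtain ⟨P, hP0, hP1⟩ := hv0.exists_uniformizer
  have hP : HasVal v0 (P ^ (-v2 z)) (-v2 z) :=
    ((show HasVal v0 P 1 from ⟨hP0, hP1⟩).zpow hv0 _).congr (mul_one _)
  set c := P ^ (-v2 z)
  have h1 : c • z ^ n ∈ hv2.ideal 0 :=
    hv2.ideal_mono (by simp) ((HasVal.smul hv2 hr hP (h.pow hv2 n)).mem hv2)
  have h2 : σ (c • z ^ n) ∈ hv2.ideal 0 := by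
    refine hv0.mem_of_isIntegral hv2 hr ?_
    have h3 := hv0.isIntegral_of_mem hv2 hr hdeg h1
    exact h3.map (σ.toAlgHom.restrictScalars hv0.ring)
  rw [map_smul, map_pow] at h2
  have h4 : HasVal v2 (σ z) (v2 (σ z)) := ⟨by simpa using h.1, rfl⟩
  have h5 := (HasVal.smul hv2 hr hP (h4.pow hv2 n)).le_of_mem hv2 h2
  exact Or.inr (by nlinarith)

/-- The additive group of operators that raise valuations by at least `N`. -/
def IsDiscVal.shift (K0 : Type*) {K2 : Type*} [Field K0] [Field K2] [Algebra K0 K2]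
    {v2 : K2 → ℤ} (hv2 : IsDiscVal v2) (N : ℤ) : AddSubgroup (Module.End K0 K2) where
  carrier := {f | ∀ M : ℤ, ∀ z ∈ hv2.ideal M, f z ∈ hv2.ideal (M + N)}
  zero_mem' := fun _ _ _ => Or.inl rfl
  add_mem' := fun hf hg M z hz => add_mem (hf M z hz) (hg M z hz)
  neg_mem' := fun hf M z hz => neg_mem (hf M z hz)

variable {f g : Module.End K0 K2} {M N : ℤ}

theorem IsDiscVal.shift_apply (hv2 : IsDiscVal v2) (hf : f ∈ hv2.shift K0 N) {z : K2}
    (hz : z ∈ hv2.ideal M) : f z ∈ hv2.ideal (M + N) :=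
  hf M z hz

theorem IsDiscVal.shift_mono (hv2 : IsDiscVal v2) (h : N ≤ M) (hf : f ∈ hv2.shift K0 M) :
    f ∈ hv2.shift K0 N :=
  fun L z hz => hv2.ideal_mono (by omega) (hf L z hz)

theorem IsDiscVal.shift_mul (hv2 : IsDiscVal v2) (hf : f ∈ hv2.shift K0 M)
    (hg : g ∈ hv2.shift K0 N) : f * g ∈ hv2.shift K0 (M + N) :=
  fun L z hz => hv2.ideal_mono (by omega) (hf _ _ (hg L z hz))

theorem IsDiscVal.one_mem_shift (hv2 : IsDiscVal v2) :
    (1 : Module.End K0 K2) ∈ hv2.shift K0 0 :=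
  fun L z hz => by simpa using hz

theorem IsDiscVal.shift_pow (hv2 : IsDiscVal v2) (hf : f ∈ hv2.shift K0 M) (k : ℕ) :
    f ^ k ∈ hv2.shift K0 (k * M) := by
  induction k with
  | zero => simpa using hv2.one_mem_shift
  | succ k ih =>
    rw [pow_succ]
    exact hv2.shift_mono (le_of_eq (by push_cast; ring)) (hv2.shift_mul ih hf)

theorem IsDiscVal.shift_smul (hv0 : IsDiscVal v0) (hv2 : IsDiscVal v2) (hr : RamIndex n v0 v2)
    {c : K0} (hc : c ∈ hv0.ideal M) (hf : f ∈ hv2.shift K0 N) :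
    c • f ∈ hv2.shift K0 (n * M + N) :=
  fun L z hz => hv2.ideal_mono (by omega) (hv0.smul_mem hv2 hr hc (hf L z hz))

theorem IsDiscVal.natCast_mem_shift (hv2 : IsDiscVal v2) {k : ℕ} (hk : (k : K2) ∈ hv2.ideal N) :
    (k : Module.End K0 K2) ∈ hv2.shift K0 N := by
  intro L z hz
  rw [Module.End.natCast_apply, nsmul_eq_mul, add_comm]
  exact hv2.mul_mem hk hz

/-- An operator that shifts an orthogonal basis by `N` shifts everything by `N`. -/
theorem IsDiscVal.mem_shift_of_basis (hv2 : IsDiscVal v2) (hv0 : IsDiscVal v0)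
    (hr : RamIndex n v0 v2) [FiniteDimensional K0 K2] (hdeg : Module.finrank K0 K2 = n)
    {ι : Type*} [Fintype ι] (hι : Fintype.card ι = n) {B : ι → K2} {val : ι → ℤ}
    (hB : ∀ i, HasVal v2 (B i) (val i)) (hinj : ∀ i j, (n : ℤ) ∣ val i - val j → i = j)
    (hf : ∀ i, f (B i) ∈ hv2.ideal (val i + N)) : f ∈ hv2.shift K0 N := by
  intro M z hz
  obtain ⟨c, rfl⟩ := hv2.exists_repr hr hdeg hι hB hinj z
  rw [map_sum]
  refine sum_mem fun i _ => ?_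
  have h1 := hv2.smul_mem_of_sum_mem hr (fun i _ => hB i) (fun i _ j _ => hinj i j) hz (mem_univ i)
  rw [map_smul]
  rcases IsDiscVal.hasVal_or_zero v0 (c i) with h | h
  · exact Or.inl (by simp [h])
  · have h2 := (HasVal.smul hv2 hr h (hB i)).le_of_mem hv2 h1
    exact hv2.ideal_mono (by omega) (hv0.smul_mem hv2 hr (h.mem hv0) (hf i))

/-- If an operator shifts a basis element exactly, it shifts exactly every element of congruent
valuation. -/
theorem HasVal.apply_of_basis (hv2 : IsDiscVal v2) (hr : RamIndex n v0 v2)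
    [FiniteDimensional K0 K2] (hdeg : Module.finrank K0 K2 = n)
    {ι : Type*} [Fintype ι] (hι : Fintype.card ι = n) {B : ι → K2} {val : ι → ℤ}
    (hB : ∀ i, HasVal v2 (B i) (val i)) (hinj : ∀ i j, (n : ℤ) ∣ val i - val j → i = j)
    (hf : f ∈ hv2.shift K0 N) {i : ι} (hfi : HasVal v2 (f (B i)) (val i + N)) {z : K2}
    (hz : HasVal v2 z M) (hM : (n : ℤ) ∣ M - val i) : HasVal v2 (f z) (M + N) := by
  classical
  obtain ⟨c, rfl⟩ := hv2.exists_repr hr hdeg hι hB hinj z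
  have hterm := fun j => hv2.smul_mem_of_sum_mem hr (fun i _ => hB i) (fun i _ j _ => hinj i j)
    (hz.mem hv2) (mem_univ j)
  have hrest : ∑ j ∈ univ.erase i, c j • B j ∈ hv2.ideal (M + 1) := by
    refine sum_mem fun j hj => ?_
    rcases IsDiscVal.hasVal_or_zero v0 (c j) with h | h
    · exact Or.inl (by simp [h])
    · have h1 := HasVal.smul hv2 hr h (hB j)
      have h2 := h1.le_of_mem hv2 (hterm j)
      refine hv2.ideal_mono ?_ (h1.mem hv2)
      by_contra! hlt
      have hMj : M - val j = n * v0 (c j) := by omega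
      have : (n : ℤ) ∣ val i - val j := by
        have := dvd_sub (Dvd.intro _ hMj.symm) hM
        simpa using this
      exact (mem_erase.1 hj).1 (hinj i j this).symm
  have hsum : ∑ j, c j • B j = c i • B i + ∑ j ∈ univ.erase i, c j • B j :=
    (add_sum_erase univ _ (mem_univ i)).symm
  have hlead : HasVal v2 (c i • B i) M := by
    have := hz.sub_mem hv2 hrest (lt_add_one _)
    rwa [hsum, add_sub_cancel_right] at this
  have hci : HasVal v0 (c i) (v0 (c i)) := ⟨(smul_ne_zero_iff.1 hlead.1).1, rfl⟩
  have hval := (HasVal.smul hv2 hr hci (hB i)).2.symm.trans hlead.2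
  rw [hsum, map_add, map_smul]
  refine ((HasVal.smul hv2 hr hci hfi).add_mem hv2 (hv2.shift_apply hf hrest) (by omega)).congr
    (by omega)

end Ramified

theorem IsDiscVal.residue_eq_zero_iff {K : Type*} [Field K] {v : K → ℤ} (hv : IsDiscVal v)
    (x : hv.ring) : IsLocalRing.residue hv.ring x = 0 ↔ (x : K) ∈ hv.ideal 1 := by
  rw [IsLocalRing.residue_eq_zero_iff, IsLocalRing.mem_maximalIdeal, mem_nonunits_iff]
  constructor
  · intro hx
    by_contra hcon
    refine hx ?_
    rcases IsDiscVal.hasVal_or_zero v (x : K) with h | h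
    · exact absurd (Or.inl h) hcon
    have hlt : v x < 1 := by
      by_contra! h'
      exact hcon (Or.inr h')
    have hinv : (x : K)⁻¹ ∈ hv.ring :=
      hv.mem_ring.2 (hv.ideal_mono (by omega) ((h.inv hv).mem hv))
    refine IsUnit.of_mul_eq_one ⟨_, hinv⟩ (Subtype.ext ?_)
    exact mul_inv_cancel₀ h.1
  · rintro hx ⟨u, rfl⟩
    have h1 := hv.mul_mem hx (hv.mem_ring.1 (u⁻¹ : hv.ringˣ).val.2)
    have h2 : ((u : hv.ring) : K) * ((u⁻¹ : hv.ringˣ) : hv.ring) = 1 := by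
      exact_mod_cast congrArg Subtype.val u.mul_inv
    rw [h2] at h1
    exact (HasVal.one hv).notMem hv (by norm_num) h1

section Order

variable {K0 K2 : Type*} [Field K0] [Field K2] [Algebra K0 K2] {v0 : K0 → ℤ} {v2 : K2 → ℤ} {n : ℕ}

/-- A `K0`-basis `U` of an algebra of operators on `K2`, indexed by `0 ≤ a < n`, whose values on
`ρ` have pairwise incongruent valuations and which multiplies like powers of a single operator up
to an error that is negligible on `ρ`. -/
structure IsApproxScaffold (hv2 : IsDiscVal v2) (n : ℕ) (U : ℕ → Module.End K0 K2) (ρ : K2)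
    (val d : ℕ → ℤ) : Prop where
  zero : U 0 = 1
  eq_zero : ∀ a, n ≤ a → U a = 0
  hasVal : ∀ a < n, HasVal v2 (U a ρ) (val a)
  incongruent : ∀ a < n, ∀ b < n, (n : ℤ) ∣ val a - val b → a = b
  mul_le : ∀ a < n, n * d a ≤ val a
  lt_mul : ∀ a < n, val a < n * d a + n
  error : ∀ j < n, ∀ a < n, (U j * U a - U (j + a)) ρ ∈ hv2.ideal (n * (d j - d 0 + d a) + n)

namespace IsApproxScaffold

variable {hv2 : IsDiscVal v2} {U : ℕ → Module.End K0 K2} {ρ : K2} {val d w : ℕ → ℤ}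

theorem coeff_mem (h : IsApproxScaffold hv2 n U ρ val d) (hv0 : IsDiscVal v0)
    (hr : RamIndex n v0 v2) {c : ℕ → K0} {k : ℤ}
    (hc : ∑ a ∈ range n, c a • U a ρ ∈ hv2.ideal (n * k)) {a : ℕ} (ha : a < n) :
    c a ∈ hv0.ideal (k - d a) := by
  have h1 := hv2.smul_mem_of_sum_mem hr (s := range n) (B := fun a => U a ρ) (val := val)
    (fun a ha => h.hasVal a (mem_range.1 ha))
    (fun a ha b hb => h.incongruent a (mem_range.1 ha) b (mem_range.1 hb)) hc (mem_range.2 ha)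
  refine HasVal.mem_of_smul_mem hv0 hv2 hr (h.hasVal a ha) h1 ?_
  have := h.lt_mul a ha
  linarith

theorem smul_apply_mem (h : IsApproxScaffold hv2 n U ρ val d) (hv0 : IsDiscVal v0)
    (hr : RamIndex n v0 v2) {c : K0} {k : ℤ} {a : ℕ} (hc : a < n → c ∈ hv0.ideal (k - d a)) :
    c • U a ρ ∈ hv2.ideal (n * k) := by
  by_cases ha : a < n
  · refine hv2.ideal_mono ?_ (hv0.smul_mem hv2 hr (hc ha) ((h.hasVal a ha).mem hv2))
    have := h.mul_le a ha
    linarith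
  · exact Or.inl (by simp [h.eq_zero a (not_lt.1 ha)])

theorem exists_coeff (h : IsApproxScaffold hv2 n U ρ val d) (hr : RamIndex n v0 v2)
    [FiniteDimensional K0 K2] (hdeg : Module.finrank K0 K2 = n) (z : K2) :
    ∃ c : ℕ → K0, ∑ a ∈ range n, c a • U a ρ = z := by
  obtain ⟨c, hc⟩ := hv2.exists_repr hr hdeg (Fintype.card_fin n) (B := fun a : Fin n => U a ρ)
    (fun a => h.hasVal a a.2) (fun a b hab => Fin.ext (h.incongruent a a.2 b b.2 hab)) z
  refine ⟨fun a => if ha : a < n then c ⟨a, ha⟩ else 0, ?_⟩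
  rw [← hc, ← Fin.sum_univ_eq_sum_range
    (fun a => (if ha : a < n then c ⟨a, ha⟩ else 0) • U a ρ) n]
  simp

theorem sum_smul_apply_add (h : IsApproxScaffold hv2 n U ρ val d) (c : ℕ → K0) (a : ℕ) :
    ∑ j ∈ range n, c j • U (j + a) ρ =
      ∑ k ∈ range n, (if a ≤ k then c (k - a) else 0) • U k ρ := by
  have h1 : ∑ j ∈ range (n - a), c j • U (j + a) ρ = ∑ j ∈ range n, c j • U (j + a) ρ := by
    refine sum_subset (range_mono (Nat.sub_le n a)) fun j _ hj => ?_
    rw [mem_range, not_lt] at hj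
    simp [h.eq_zero (j + a) (by omega)]
  have h2 : ∑ k ∈ Ico a n, c (k - a) • U k ρ =
      ∑ k ∈ range n, (if a ≤ k then c (k - a) else 0) • U k ρ := by
    have : Ico a n = (range n).filter (a ≤ ·) := by
      ext k; simp [and_comm]
    rw [this, sum_filter]
    refine sum_congr rfl fun k _ => ?_
    split_ifs <;> simp
  rw [← h1, ← h2, sum_Ico_eq_sum_range]
  refine sum_congr rfl fun j _ => ?_
  simp [add_comm]

/-- The operator `∑ c_j U_j` applied to `U_a ρ`, split into main term and error. -/
theorem sum_apply_apply (h : IsApproxScaffold hv2 n U ρ val d) (c : ℕ → K0) (a : ℕ) :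
    (∑ j ∈ range n, c j • U j) (U a ρ) =
      ∑ k ∈ range n, (if a ≤ k then c (k - a) else 0) • U k ρ +
        ∑ j ∈ range n, c j • (U j * U a - U (j + a)) ρ := by
  rw [← h.sum_smul_apply_add, ← sum_add_distrib, LinearMap.sum_apply]
  refine sum_congr rfl fun j _ => ?_
  rw [← smul_add, LinearMap.smul_apply]
  congr 1
  simp

theorem error_mem (h : IsApproxScaffold hv2 n U ρ val d) (hv0 : IsDiscVal v0)
    (hr : RamIndex n v0 v2) {c : ℕ → K0} (hc : ∀ j < n, c j ∈ hv0.ideal (d 0 - d j)) {a : ℕ}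
    (ha : a < n) :
    ∑ j ∈ range n, c j • (U j * U a - U (j + a)) ρ ∈ hv2.ideal (n * d a + n) := by
  refine sum_mem fun j hj => ?_
  rw [mem_range] at hj
  refine hv2.ideal_mono (le_of_eq ?_) (hv0.smul_mem hv2 hr (hc j hj) (h.error j hj a ha))
  ring

variable {π0 : K0}

theorem le_sub (hw : ∀ j < n, IsLeast {x : ℤ | ∃ a : ℕ, a < n - j ∧ x = d (j + a) - d a} (w j))
    {j a : ℕ} (h : j + a < n) : w j ≤ d (j + a) - d a :=
  (hw j (by omega)).2 ⟨a, by omega, rfl⟩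

/-- Integrality of `∑ c_j U_j` in terms of its coefficients. -/
theorem sum_preserves_iff (h : IsApproxScaffold hv2 n U ρ val d) (hv0 : IsDiscVal v0)
    (hr : RamIndex n v0 v2) [FiniteDimensional K0 K2] (hdeg : Module.finrank K0 K2 = n)
    (hπ0 : HasVal v0 π0 1)
    (hw : ∀ j < n, IsLeast {x : ℤ | ∃ a : ℕ, a < n - j ∧ x = d (j + a) - d a} (w j))
    (c : ℕ → K0) :
    (∀ z ∈ hv2.ideal 0, (∑ j ∈ range n, c j • U j) z ∈ hv2.ideal 0) ↔
      ∀ j < n, c j ∈ hv0.ideal (-w j) := by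
  constructor
  · intro hα
    have happ : ∀ a < n, (∑ j ∈ range n, c j • U j) (U a ρ) ∈ hv2.ideal (n * d a) := by
      intro a ha
      have hπ : ∀ k : ℤ, HasVal v0 (π0 ^ k) k := fun k => (hπ0.zpow hv0 k).congr (mul_one k)
      have h1 : π0 ^ (-d a) • U a ρ ∈ hv2.ideal 0 := by
        simpa using h.smul_apply_mem hv0 hr (k := 0) fun _ =>
          hv0.ideal_mono (by omega) ((hπ (-d a)).mem hv0)
      have h2 := hα _ h1
      rw [map_smul] at h2
      have h3 := hv0.smul_mem hv2 hr ((hπ (d a)).mem hv0) h2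
      rwa [smul_smul, ← zpow_add₀ hπ0.1, add_neg_cancel, zpow_zero, one_smul, add_zero] at h3
    have hc0 : ∀ j < n, c j ∈ hv0.ideal (d 0 - d j) := by
      intro j hj
      have h1 := happ 0 (by omega)
      have h2 : (∑ j ∈ range n, c j • U j) (U 0 ρ) = ∑ j ∈ range n, c j • U j ρ := by
        simp [h.zero, LinearMap.sum_apply]
      rw [h2] at h1
      exact h.coeff_mem hv0 hr h1 hj
    intro j hj
    obtain ⟨a, ha, hwa⟩ := (hw j hj).1
    have h1 := happ a (by omega)
    rw [h.sum_apply_apply] at h1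
    have h2 := sub_mem h1 (hv2.ideal_mono (by omega) (h.error_mem hv0 hr hc0 (by omega : a < n)))
    rw [add_sub_cancel_right] at h2
    have h3 := h.coeff_mem hv0 hr h2 (by omega : j + a < n)
    rw [if_pos (by omega), Nat.add_sub_cancel] at h3
    exact hv0.ideal_mono (by omega) h3
  · intro hc z hz
    obtain ⟨e, rfl⟩ := h.exists_coeff hr hdeg z
    have he : ∀ a < n, e a ∈ hv0.ideal (-d a) := fun a ha => by
      simpa using h.coeff_mem hv0 hr (k := 0) (by simpa using hz) ha
    rw [map_sum]
    refine sum_mem fun a ha => ?_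
    rw [mem_range] at ha
    rw [map_smul, h.sum_apply_apply]
    have h1 : ∑ k ∈ range n, (if a ≤ k then c (k - a) else 0) • U k ρ ∈ hv2.ideal (n * d a) := by
      refine sum_mem fun k _ => h.smul_apply_mem hv0 hr fun hk => ?_
      split_ifs with hak
      · have := le_sub hw (by omega : k - a + a < n)
        rw [Nat.sub_add_cancel hak] at this
        exact hv0.ideal_mono (by omega) (hc (k - a) (by omega))
      · exact zero_mem _
    have h2 := h.error_mem hv0 hr (fun j hj => ?_) ha (c := c)
    · have h3 := hv0.smul_mem hv2 hr (he a ha) (add_mem h1 (hv2.ideal_mono (by omega) h2))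
      exact hv2.ideal_mono (by linarith) h3
    · have := le_sub hw (by omega : j + 0 < n)
      exact hv0.ideal_mono (by simp at this; omega) (hc j hj)

/-- If `w j = d j - d 0` for all `j`, then `π0 ^ (-d 0) • ρ` generates the integers. -/
theorem exists_apply_eq (h : IsApproxScaffold hv2 n U ρ val d) (hv0 : IsDiscVal v0)
    (hr : RamIndex n v0 v2) [FiniteDimensional K0 K2] (hdeg : Module.finrank K0 K2 = n)
    (hπ0 : HasVal v0 π0 1)
    (hw : ∀ j < n, IsLeast {x : ℤ | ∃ a : ℕ, a < n - j ∧ x = d (j + a) - d a} (w j))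
    (hwd : ∀ j < n, w j = d j - d 0) {z : K2} (hz : z ∈ hv2.ideal 0) :
    ∃ c : ℕ → K0, (∀ z ∈ hv2.ideal 0, (∑ j ∈ range n, c j • U j) z ∈ hv2.ideal 0) ∧
      (∑ j ∈ range n, c j • U j) (π0 ^ (-d 0) • ρ) = z := by
  obtain ⟨e, rfl⟩ := h.exists_coeff hr hdeg z
  have he : ∀ a < n, e a ∈ hv0.ideal (-d a) := fun a ha => by
    simpa using h.coeff_mem hv0 hr (k := 0) (by simpa using hz) ha
  refine ⟨fun j => e j * π0 ^ d 0, ?_, ?_⟩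
  · rw [h.sum_preserves_iff hv0 hr hdeg hπ0 hw]
    intro j hj
    refine hv0.ideal_mono ?_ (hv0.mul_mem (he j hj) ((hπ0.zpow hv0 (d 0)).mem hv0))
    have := hwd j hj
    omega
  · rw [LinearMap.sum_apply]
    refine sum_congr rfl fun j _ => ?_
    rw [LinearMap.smul_apply, map_smul, smul_smul, mul_assoc, ← zpow_add₀ hπ0.1, add_neg_cancel,
      zpow_zero, mul_one]

/-- If some element generates the integers, then `w j = d j - d 0` for all `j`. -/
theorem eq_sub_of_generates (h : IsApproxScaffold hv2 n U ρ val d) (hv0 : IsDiscVal v0)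
    (hr : RamIndex n v0 v2) [FiniteDimensional K0 K2] (hdeg : Module.finrank K0 K2 = n)
    (hπ0 : HasVal v0 π0 1)
    (hw : ∀ j < n, IsLeast {x : ℤ | ∃ a : ℕ, a < n - j ∧ x = d (j + a) - d a} (w j))
    {ν : K2} (hν : ν ∈ hv2.ideal 0)
    (hgen : ∀ z ∈ hv2.ideal 0, ∃ c : ℕ → K0,
      (∀ z ∈ hv2.ideal 0, (∑ j ∈ range n, c j • U j) z ∈ hv2.ideal 0) ∧
      (∑ j ∈ range n, c j • U j) ν = z) :
    ∀ j < n, w j = d j - d 0 := by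
  have hπ : ∀ k : ℤ, HasVal v0 (π0 ^ k) k := fun k => (hπ0.zpow hv0 k).congr (mul_one k)
  obtain ⟨e, rfl⟩ := h.exists_coeff hr hdeg ν
  have he : ∀ a < n, e a ∈ hv0.ideal (-d a) := fun a ha => by
    simpa using h.coeff_mem hv0 hr (k := 0) (by simpa using hν) ha
  have hrow : ∀ k : Fin n, ∃ c : ℕ → K0, (∀ j < n, c j ∈ hv0.ideal (-w j)) ∧
      (∑ j ∈ range n, c j • U j) (∑ a ∈ range n, e a • U a ρ) = π0 ^ (-d k) • U k ρ := by
    intro k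
    have h1 : π0 ^ (-d k) • U k ρ ∈ hv2.ideal 0 := by
      simpa using h.smul_apply_mem hv0 hr (k := 0) fun _ =>
        hv0.ideal_mono (by omega) ((hπ (-d k)).mem hv0)
    obtain ⟨c, hc, hck⟩ := hgen _ h1
    exact ⟨c, (h.sum_preserves_iff hv0 hr hdeg hπ0 hw c).1 hc, hck⟩
  choose c hc hck using hrow
  have hC : ∀ k j : Fin n, c k j * π0 ^ w j ∈ hv0.ring := fun k j =>
    hv0.mem_ring.2 (hv0.ideal_mono (by omega) (hv0.mul_mem (hc k j j.2) ((hπ (w j)).mem hv0)))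
  have hL : ∀ j l : Fin n,
      (if j ≤ l then e (l - j : ℕ) * π0 ^ (d l - w j) else 0) ∈ hv0.ring := by
    intro j l
    split_ifs with hjl
    · have hjl' : (j : ℕ) ≤ l := hjl
      have h1 := le_sub hw (by have := l.2; omega : (j : ℕ) + (l - j : ℕ) < n)
      rw [Nat.add_sub_cancel' hjl'] at h1
      exact hv0.mem_ring.2 (hv0.ideal_mono (by omega)
        (hv0.mul_mem (he (l - j) (by have := l.2; omega)) ((hπ (d l - w j)).mem hv0)))
    · exact zero_mem _
  let C : Matrix (Fin n) (Fin n) hv0.ring := fun k j => ⟨_, hC k j⟩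
  let L : Matrix (Fin n) (Fin n) hv0.ring := fun j l => ⟨_, hL j l⟩
  have hCL : ∀ k l : Fin n, (((C * L - 1) k l : hv0.ring) : K0) ∈ hv0.ideal 1 := by
    intro k l
    have hc0 : ∀ j < n, c k j ∈ hv0.ideal (d 0 - d j) := fun j hj => by
      have := le_sub hw (by omega : j + 0 < n)
      exact hv0.ideal_mono (by simp at this; omega) (hc k j hj)
    have h1 : ∑ l ∈ range n, ((∑ a ∈ range n, e a * (if a ≤ l then c k (l - a) else 0)) -
        (if l = k then π0 ^ (-d k) else 0)) • U l ρ ∈ hv2.ideal (n * 1) := by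
      have h2 : ∑ l ∈ range n, ((∑ a ∈ range n, e a * (if a ≤ l then c k (l - a) else 0)) -
          (if l = (k : ℕ) then π0 ^ (-d k) else 0)) • U l ρ =
          -∑ a ∈ range n, e a • ∑ j ∈ range n, c k j • (U j * U a - U (j + a)) ρ := by
        have h3 := hck k
        simp only [map_sum, map_smul, h.sum_apply_apply, smul_add, sum_add_distrib] at h3
        simp only [sub_smul, sum_sub_distrib, sum_smul]
        rw [sum_comm]
        have h4 : ∑ l ∈ range n, (if l = (k : ℕ) then π0 ^ (-d k) else 0) • U l ρ =
            π0 ^ (-d k) • U k ρ := by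
          rw [sum_eq_single (k : ℕ)]
          · simp
          · intro b _ hb; simp [hb]
          · intro hk; exact absurd (mem_range.2 k.2) hk
        rw [h4, ← h3]
        simp only [smul_sum, smul_smul]
        abel
      rw [h2]
      refine neg_mem (sum_mem fun a ha => ?_)
      rw [mem_range] at ha
      refine hv2.ideal_mono (le_of_eq ?_)
        (hv0.smul_mem hv2 hr (he a ha) (h.error_mem hv0 hr hc0 ha))
      ring
    have h2 := h.coeff_mem hv0 hr h1 l.2
    have h3 := hv0.mul_mem h2 ((hπ (d l)).mem hv0)
    have h4 : (((C * L - 1) k l : hv0.ring) : K0) =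
        ((∑ a ∈ range n, e a * (if a ≤ (l : ℕ) then c k (l - a) else 0)) -
        (if (l : ℕ) = k then π0 ^ (-d k) else 0)) * π0 ^ d l := by
      have hreflect : ∑ a ∈ range n, e a * (if a ≤ (l : ℕ) then c k (l - a) else 0) =
          ∑ j ∈ range n, (if j ≤ (l : ℕ) then e (l - j) * c k j else 0) := by
        have hsub : range (l + 1) ⊆ range n := range_mono l.2
        rw [← sum_subset hsub, ← sum_subset hsub, ← sum_range_reflect]
        · refine sum_congr rfl fun j hj => ?_
          rw [mem_range] at hj
          have e1 : (l : ℕ) + 1 - 1 - j = l - j := by omega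
          have e2 : (l : ℕ) - (l - j) = j := by omega
          rw [e1, e2, if_pos (by omega), if_pos (by omega)]
        · intro j _ hj
          rw [mem_range] at hj
          rw [if_neg (by omega)]
        · intro j _ hj
          rw [mem_range] at hj
          rw [if_neg (by omega), mul_zero]
      rw [hreflect, Matrix.sub_apply, Matrix.mul_apply, sub_mul, sum_mul,
        ← Fin.sum_univ_eq_sum_range
          (fun j => (if j ≤ (l : ℕ) then e (l - j) * c k j else 0) * π0 ^ d l) n]
      push_cast
      congr 1
      · refine sum_congr rfl fun j _ => ?_
        change c k j * π0 ^ w j * (if j ≤ l then e (l - j : ℕ) * π0 ^ (d l - w j) else 0) = _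
        simp only [Fin.le_def]
        split_ifs
        · rw [zpow_sub₀ hπ0.1]
          have := (hπ (w j)).1
          field_simp
        · simp
      · rw [Matrix.one_apply]
        by_cases hkl : k = l
        · subst hkl
          rw [if_pos rfl, if_pos rfl, ← zpow_add₀ hπ0.1]
          simp
        · rw [if_neg hkl, if_neg fun h => hkl (Fin.ext h.symm)]
          simp
    rw [h4]
    exact hv0.ideal_mono (by omega) h3
  let φ := IsLocalRing.residue hv0.ring
  have hprod : C.map φ * L.map φ = 1 := by
    rw [← Matrix.map_mul]
    ext k l
    have h1 := (hv0.residue_eq_zero_iff _).2 (hCL k l)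
    rw [Matrix.sub_apply, map_sub, sub_eq_zero] at h1
    rw [Matrix.map_apply]
    refine h1.trans ?_
    rw [Matrix.one_apply, Matrix.one_apply]
    split_ifs <;> simp
  have hdet : (L.map φ).det ≠ 0 := by
    intro h0
    have := congrArg Matrix.det hprod
    rw [Matrix.det_mul, h0, mul_zero, Matrix.det_one] at this
    exact zero_ne_one this
  have htri : (L.map φ).IsUpperTriangular := by
    intro i j hij
    have : L i j = 0 := Subtype.ext (if_neg (not_le.2 hij))
    rw [Matrix.map_apply, this, map_zero]
  rw [Matrix.det_of_isUpperTriangular htri, prod_ne_zero_iff] at hdet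
  have hdiag : ∀ j < n, e 0 ≠ 0 ∧ v0 (e 0) + (d j - w j) = 0 := by
    intro j hj
    have h1 := hdet ⟨j, hj⟩ (mem_univ _)
    rw [Matrix.map_apply, ne_eq, hv0.residue_eq_zero_iff] at h1
    have h2 : ((L ⟨j, hj⟩ ⟨j, hj⟩ : hv0.ring) : K0) = e 0 * π0 ^ (d j - w j) := by
      change (if (⟨j, hj⟩ : Fin n) ≤ ⟨j, hj⟩ then _ else _) = _
      rw [if_pos le_rfl]
      simp
    have h3 := hv0.mem_ring.1 (L ⟨j, hj⟩ ⟨j, hj⟩).2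
    rw [h2] at h1 h3
    rcases IsDiscVal.hasVal_or_zero v0 (e 0) with h4 | h4
    · exact absurd (Or.inl (by simp [h4])) h1
    · have h5 := h4.mul (hπ (d j - w j)) hv0
      have h6 := h5.le_of_mem hv0 h3
      refine ⟨h4.1, ?_⟩
      by_contra hne
      exact h1 (hv0.ideal_mono (by omega) (h5.mem hv0))
  intro j hj
  have h0 := (hdiag 0 (by omega)).2
  have hj' := (hdiag j hj).2
  obtain ⟨a, ha, hwa⟩ := (hw 0 (by omega)).1
  rw [zero_add] at hwa
  omega

end IsApproxScaffold

end Order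

/-- The data of a cyclic extension `K2 / K0` of degree `p ^ 2` generated by the near-Witt-vector
equations `x1 ^ p - x1 = a1` and `x2 ^ p - x2 = μ ^ p * a1 + D (x1, a1)`, with a generator `σ`
of its Galois group and ramification numbers `b1 < b2`. -/
structure WittTower {K0 K2 : Type*} [Field K0] [Field K2] [Algebra K0 K2] (p : ℕ) (v0 : K0 → ℤ)
    (v2 : K2 → ℤ) (e m b1 b2 : ℤ) (a1 μ : K0) (x1 x2 ε δ : K2) (σ : K2 ≃ₐ[K0] K2) : Prop where
  prime : p.Prime
  finrank : Module.finrank K0 K2 = p ^ 2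
  hv0 : IsDiscVal v0
  hv2 : IsDiscVal v2
  ram : RamIndex (p ^ 2) v0 v2
  hasVal_p : HasVal v0 (p : K0) e
  hasVal_a1 : HasVal v0 a1 (-b1)
  hasVal_μ : HasVal v0 μ (-m)
  not_dvd : ¬ (p : ℤ) ∣ b1
  b1_pos : 0 < b1
  m_pos : 0 < m
  lt_m : ((p : ℤ) ^ 2 - 1) * b1 < (p : ℤ) ^ 2 * m
  b2_eq : b2 = (p : ℤ) ^ 2 * m + b1
  lt_e : (p + 1) * b2 - (p - 1) * b1 < (p : ℤ) ^ 2 * e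
  x1_eq : x1 ^ p - x1 = algebraMap K0 K2 a1
  x2_eq : x2 ^ p - x2 = algebraMap K0 K2 (μ ^ p * a1) +
      (x1 ^ p + (algebraMap K0 K2 a1) ^ p - (x1 + algebraMap K0 K2 a1) ^ p) / (p : K2)
  map_x1 : σ x1 = x1 + 1 + ε
  map_x2 : σ x2 = x2 + (x1 ^ p + 1 - (x1 + 1) ^ p) / (p : K2) + δ
  hasVal_ε : HasVal v2 ε ((p : ℤ) ^ 2 * e - p * (p - 1) * b1)
  δ_mem : δ ∈ hv2.ideal 1

namespace WittTower

variable {K0 K2 : Type*} [Field K0] [Field K2] [Algebra K0 K2] {p : ℕ} {v0 : K0 → ℤ}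
  {v2 : K2 → ℤ} {e m b1 b2 : ℤ} {a1 μ : K0} {x1 x2 ε δ : K2} {σ : K2 ≃ₐ[K0] K2}

section Arithmetic

theorem two_le (h : WittTower p v0 v2 e m b1 b2 a1 μ x1 x2 ε δ σ) : (2 : ℤ) ≤ p := by
  exact_mod_cast h.prime.two_le

theorem lt_b2 (h : WittTower p v0 v2 e m b1 b2 a1 μ x1 x2 ε δ σ) : (p : ℤ) ^ 2 * b1 < b2 := by
  linarith [h.lt_m, h.b2_eq]

theorem b2_pos (h : WittTower p v0 v2 e m b1 b2 a1 μ x1 x2 ε δ σ) : 0 < b2 := by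
  nlinarith [h.lt_b2, mul_nonneg (sq_nonneg (p : ℤ)) h.b1_pos.le]

theorem mul_b2_lt (h : WittTower p v0 v2 e m b1 b2 a1 μ x1 x2 ε δ σ) :
    (p : ℤ) * b2 + p * b1 < (p : ℤ) ^ 2 * e := by
  have h1 := mul_nonneg h.b1_pos.le (mul_nonneg (by linarith [h.two_le] : (0 : ℤ) ≤ p - 1)
    (by linarith [h.two_le] : (0 : ℤ) ≤ p - 1))
  nlinarith [h.lt_e, h.lt_b2, h.b1_pos]

theorem e_pos (h : WittTower p v0 v2 e m b1 b2 a1 μ x1 x2 ε δ σ) : 1 ≤ e := by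
  by_contra! hlt
  have h1 : (p : ℤ) ^ 2 * e ≤ 0 :=
    mul_nonpos_of_nonneg_of_nonpos (sq_nonneg _) (by omega)
  have h2 : 0 ≤ (p : ℤ) * b2 := mul_nonneg (by positivity) h.b2_pos.le
  have h3 : 0 ≤ (p : ℤ) * b1 := mul_nonneg (by positivity) h.b1_pos.le
  linarith [h.mul_b2_lt]

theorem hasVal_p' (h : WittTower p v0 v2 e m b1 b2 a1 μ x1 x2 ε δ σ) :
    HasVal v2 (p : K2) ((p : ℤ) ^ 2 * e) := by
  simpa using h.hasVal_p.algebraMap h.ram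

theorem e_pos' (h : WittTower p v0 v2 e m b1 b2 a1 μ x1 x2 ε δ σ) : 1 ≤ (p : ℤ) ^ 2 * e := by
  have h2 : 0 ≤ (p : ℤ) * b2 := mul_nonneg (by positivity) h.b2_pos.le
  have h3 : 0 ≤ (p : ℤ) * b1 := mul_nonneg (by positivity) h.b1_pos.le
  linarith [h.mul_b2_lt]

end Arithmetic

section Generators

theorem hasVal_x1 (h : WittTower p v0 v2 e m b1 b2 a1 μ x1 x2 ε δ σ) :
    HasVal v2 x1 (-(p * b1)) := by
  refine h.hv2.hasVal_of_artinSchreier h.prime ?_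
    ((h.hasVal_a1.algebraMap h.ram).congr ?_) h.x1_eq
  · nlinarith [h.two_le, h.b1_pos]
  · push_cast; ring

theorem carry_mem (h : WittTower p v0 v2 e m b1 b2 a1 μ x1 x2 ε δ σ) :
    (x1 ^ p + (algebraMap K0 K2 a1) ^ p - (x1 + algebraMap K0 K2 a1) ^ p) / (p : K2)
      ∈ h.hv2.ideal (-(p * b1) - (p - 1) * p ^ 2 * b1) := by
  have hP := h.two_le
  have h1 := mul_nonneg (mul_nonneg (by linarith : (0 : ℤ) ≤ p) (by linarith : (0 : ℤ) ≤ p - 1))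
    (mul_nonneg (by linarith : (0 : ℤ) ≤ p - 2) h.b1_pos.le)
  obtain ⟨R, hR, hRe⟩ := h.hv2.exists_add_pow_prime h.prime (h.hasVal_x1.mem h.hv2)
    ((h.hasVal_a1.algebraMap h.ram).mem h.hv2) (M := -(p * b1) - (p - 1) * p ^ 2 * b1)
    (by push_cast; nlinarith) (by push_cast; nlinarith)
  rw [hRe]
  have hp0 := h.hasVal_p'.1
  convert neg_mem hR using 1
  field_simp
  ring

theorem hasVal_x2 (h : WittTower p v0 v2 e m b1 b2 a1 μ x1 x2 ε δ σ) :
    HasVal v2 x2 (-(p ^ 2 * m + p * b1)) := by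
  have hP := h.two_le
  have hb := h.b1_pos
  have h1 : 0 ≤ (p : ℤ) * b1 * (p - 1) := mul_nonneg (by positivity) (by linarith)
  refine h.hv2.hasVal_of_artinSchreier h.prime ?_
    ((((h.hasVal_μ.pow h.hv0 p).mul h.hasVal_a1 h.hv0).algebraMap h.ram).add_mem h.hv2
      h.carry_mem ?_ |>.congr ?_) h.x2_eq
  · nlinarith [h.m_pos, mul_pos (by linarith : (0 : ℤ) < p) h.b1_pos, sq_nonneg (p : ℤ),
      mul_nonneg (sq_nonneg (p : ℤ)) h.m_pos.le]
  · push_cast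
    nlinarith [mul_lt_mul_of_pos_left h.lt_m (by linarith : (0 : ℤ) < p)]
  · push_cast
    ring

theorem μ_smul_x1 (h : WittTower p v0 v2 e m b1 b2 a1 μ x1 x2 ε δ σ) :
    HasVal v2 (algebraMap K0 K2 μ * x1) (-(p ^ 2 * m + p * b1)) :=
  ((h.hasVal_μ.algebraMap h.ram).mul h.hasVal_x1 h.hv2).congr (by push_cast; ring)

/-- The modified second generator has valuation `-b2`. -/
theorem hasVal_sub (h : WittTower p v0 v2 e m b1 b2 a1 μ x1 x2 ε δ σ) :
    HasVal v2 (x2 - algebraMap K0 K2 μ * x1) (-b2) := by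
  have hP := h.two_le
  have hb := h.b1_pos
  have h0 : 0 ≤ (p : ℤ) * b1 * (p - 1) := mul_nonneg (by positivity) (by linarith)
  have hm : 0 < (p : ℤ) ^ 2 * m * (p - 1) :=
    mul_pos (mul_pos (by positivity) h.m_pos) (by linarith)
  have hX := sub_mem (h.hasVal_x2.mem h.hv2) (h.μ_smul_x1.mem h.hv2)
  obtain ⟨R, hR, hRe⟩ := h.hv2.exists_add_pow_prime h.prime hX (h.μ_smul_x1.mem h.hv2)
    (M := -(p * (p ^ 2 * m + p * b1))) (by nlinarith) (by nlinarith)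
  rw [sub_add_cancel] at hRe
  have h1 : HasVal v2 (-(algebraMap K0 K2 (μ ^ p) * x1)) (-(p * b2)) :=
    ((((h.hasVal_μ.pow h.hv0 p).algebraMap h.ram).mul h.hasVal_x1 h.hv2).neg h.hv2).congr
      (by rw [h.b2_eq]; push_cast; ring)
  have h2 := add_mem (h.hv2.ideal_mono (N := -(p * b2) + 1) ?_ h.carry_mem)
    (sub_mem (h.hv2.ideal_mono (N := -(p * b2) + 1) ?_ (h.μ_smul_x1.mem h.hv2))
      (h.hv2.ideal_mono (N := -(p * b2) + 1) ?_ (h.hv2.mul_mem (h.hasVal_p'.mem h.hv2) hR)))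
  · refine h.hv2.hasVal_of_artinSchreier h.prime (by linarith [h.b2_pos])
      (h1.add_mem h.hv2 h2 (by linarith)) ?_
    have e1 := h.x1_eq
    have e2 := h.x2_eq
    rw [map_mul, ← e1] at e2
    rw [← e1]
    rw [hRe] at e2
    rw [map_pow] at e2 ⊢
    linear_combination e2
  · rw [h.b2_eq]
    nlinarith [mul_lt_mul_of_pos_left h.lt_m (by linarith : (0 : ℤ) < p)]
  · rw [h.b2_eq]
    nlinarith
  · have h3 := h.mul_b2_lt
    have h4 := h.lt_b2
    have h5 : b2 ≤ p * b2 := by nlinarith [h.b2_pos]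
    have h6 : (p : ℤ) * b2 = p * (p ^ 2 * m + b1) := by rw [h.b2_eq]
    nlinarith

end Generators

section Galois

theorem pow_apply_sub (σ : K2 ≃ₐ[K0] K2) (y : K2) (k : ℕ) :
    (σ ^ k) y - y = ∑ i ∈ range k, (σ ^ i) (σ y - y) := by
  have := sum_range_sub (fun i => (σ ^ i) y) k
  rw [pow_zero, AlgEquiv.one_apply] at this
  rw [← this]
  refine sum_congr rfl fun i _ => ?_
  rw [map_sub, pow_succ, AlgEquiv.mul_apply]

theorem one_le_ε (h : WittTower p v0 v2 e m b1 b2 a1 μ x1 x2 ε δ σ) :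
    p * (p - 1) * b1 + 1 ≤ (p : ℤ) ^ 2 * e - p * (p - 1) * b1 := by
  have h3 := h.mul_b2_lt
  have h4 := h.lt_b2
  have hP := h.two_le
  have h5 : 2 * b2 ≤ p * b2 := by nlinarith [h.b2_pos]
  have h6 : 0 < p * b1 := mul_pos (by linarith) h.b1_pos
  nlinarith

theorem le_errorBound (h : WittTower p v0 v2 e m b1 b2 a1 μ x1 x2 ε δ σ) :
    b2 + p * b1 + 1 ≤ (p : ℤ) ^ 2 * e - (p - 1) * (p ^ 2 * m + p * b1) := by
  have h1 := h.lt_e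
  have h2 := h.lt_b2
  have h3 : (p - 1 : ℤ) * b2 = (p - 1) * (p ^ 2 * m + b1) := by rw [h.b2_eq]
  nlinarith

/-- The automorphism `σ` translates the modified second generator by `-μ` up to a small error. -/
theorem exists_apply_add (h : WittTower p v0 v2 e m b1 b2 a1 μ x1 x2 ε δ σ) :
    ∃ g ∈ h.hv2.ideal (-(p * (p - 1) * b1)),
      σ (x2 - algebraMap K0 K2 μ * x1 + algebraMap K0 K2 μ) =
        x2 - algebraMap K0 K2 μ * x1 + g := by
  have hP := h.two_le
  have hb := h.b1_pos
  have hp0 := h.hasVal_p'.1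
  have h0 : 0 ≤ (p : ℤ) * (p - 1) * b1 :=
    mul_nonneg (mul_nonneg (by positivity) (by linarith)) hb.le
  obtain ⟨R, hR, hRe⟩ := h.hv2.exists_add_pow_prime h.prime (h.hasVal_x1.mem h.hv2) h.hv2.one_mem
    (M := -(p * (p - 1) * b1)) (by nlinarith) (by nlinarith)
  refine ⟨-R + δ - algebraMap K0 K2 μ * ε, sub_mem (add_mem (neg_mem hR)
    (h.hv2.ideal_mono (by linarith) h.δ_mem)) (h.hv2.ideal_mono ?_
    (h.hv2.mul_mem ((h.hasVal_μ.algebraMap h.ram).mem h.hv2) (h.hasVal_ε.mem h.hv2))), ?_⟩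
  · have h1 := h.mul_b2_lt
    have h2 : b2 ≤ p * b2 := by nlinarith [h.b2_pos]
    have h3 := h.b2_eq
    push_cast
    nlinarith [mul_pos (by linarith : (0 : ℤ) < p) hb]
  · rw [map_add, map_sub, map_mul, AlgEquiv.commutes, h.map_x1, h.map_x2, hRe, one_pow]
    field_simp
    ring

theorem binom_μ_mem (h : WittTower p v0 v2 e m b1 b2 a1 μ x1 x2 ε δ σ) {k : ℕ} (hk : k < p) :
    binom μ k ∈ h.hv0.ideal (-(k * m)) :=
  h.hv0.binom_mem h.prime h.hasVal_p h.e_pos h.m_pos.le (h.hasVal_μ.mem h.hv0) hk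

theorem hasVal_one_add_ε (h : WittTower p v0 v2 e m b1 b2 a1 μ x1 x2 ε δ σ) :
    HasVal v2 (1 + ε) 0 := by
  have hP := h.two_le
  have hG : 0 ≤ p * (p - 1) * b1 :=
    mul_nonneg (mul_nonneg (by linarith) (by linarith)) h.b1_pos.le
  exact (HasVal.one h.hv2).add_mem h.hv2 (h.hasVal_ε.mem h.hv2) (by linarith [h.one_le_ε])

variable [FiniteDimensional K0 K2]

theorem map_mem (h : WittTower p v0 v2 e m b1 b2 a1 μ x1 x2 ε δ σ) (τ : K2 ≃ₐ[K0] K2) {z : K2}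
    {N : ℤ} (hz : z ∈ h.hv2.ideal N) : τ z ∈ h.hv2.ideal N :=
  h.hv0.map_mem h.hv2 h.ram h.finrank τ hz

/-- The automorphism `σ ^ p` fixes `x1`. -/
theorem pow_apply_x1 (h : WittTower p v0 v2 e m b1 b2 a1 μ x1 x2 ε δ σ) : (σ ^ p) x1 = x1 := by
  have hP := h.two_le
  have hb := h.b1_pos
  have h0 : 0 ≤ (p : ℤ) * (p - 1) * b1 := by
    exact mul_nonneg (mul_nonneg (by positivity) (by linarith)) hb.le
  have hε := h.one_le_ε
  rw [← sub_eq_zero]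
  have h1 : (σ ^ p) x1 - x1 ∈ h.hv2.ideal 1 := by
    rw [pow_apply_sub, h.map_x1,
      sum_congr rfl fun i _ => show (σ ^ i) (x1 + 1 + ε - x1) = 1 + (σ ^ i) ε by
        rw [show x1 + 1 + ε - x1 = 1 + ε by ring, map_add, map_one],
      sum_add_distrib, sum_const, card_range, nsmul_eq_mul, mul_one]
    exact add_mem (h.hv2.ideal_mono h.e_pos' (h.hasVal_p'.mem h.hv2))
      (sum_mem fun i _ => h.map_mem _ (h.hv2.ideal_mono (by linarith) (h.hasVal_ε.mem h.hv2)))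
  have h2 : ((σ ^ p) x1) ^ p - (σ ^ p) x1 = x1 ^ p - x1 := by
    rw [← map_pow, ← map_sub, h.x1_eq, AlgEquiv.commutes]
  set ζ := (σ ^ p) x1 - x1 with hζ
  rw [show (σ ^ p) x1 = x1 + ζ by rw [hζ]; ring] at h2
  rcases IsDiscVal.hasVal_or_zero v2 ζ with h3 | h3
  · exact h3
  exfalso
  have hs := h3.le_of_mem h.hv2 h1
  obtain ⟨R, hR, hRe⟩ := h.hv2.exists_add_pow_prime h.prime (h.hasVal_x1.mem h.hv2)
    (h3.mem h.hv2) (M := -(p * (p - 1) * b1) + v2 ζ) (by nlinarith)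
    (by nlinarith [mul_nonneg (by linarith : (0 : ℤ) ≤ p - 2) (by linarith : 0 ≤ v2 ζ),
      mul_nonneg (mul_nonneg (by linarith : (0 : ℤ) ≤ p - 2) (by linarith : (0 : ℤ) ≤ p)) hb.le])
  refine h3.notMem h.hv2 (lt_add_one _) ?_
  have h4 : ζ = ζ ^ p + p * R := by linear_combination hRe - h2
  have h5 : ζ ^ p + p * R ∈ h.hv2.ideal (v2 ζ + 1) :=
    add_mem (h.hv2.ideal_mono (by nlinarith) (h.hv2.pow_mem (h3.mem h.hv2) p))
      (h.hv2.ideal_mono (by linarith) (h.hv2.mul_mem (h.hasVal_p'.mem h.hv2) hR))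
  rwa [← h4] at h5

theorem pow_apply_x2_sub_sub_mem_one (h : WittTower p v0 v2 e m b1 b2 a1 μ x1 x2 ε δ σ) :
    (σ ^ p) x2 - x2 - 1 ∈ h.hv2.ideal 1 := by
  have hP := h.two_le
  have hb := h.b1_pos
  have hp0 := h.hasVal_p'.1
  have h0 : 0 ≤ (p : ℤ) * (p - 1) * b1 :=
    mul_nonneg (mul_nonneg (by positivity) (by linarith)) hb.le
  have hε := h.one_le_ε
  have hε2 := mul_nonneg (by linarith : (0 : ℤ) ≤ p - 2)
    (by linarith : 0 ≤ (p : ℤ) ^ 2 * e - p * (p - 1) * b1)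
  have hb' := mul_nonneg (mul_nonneg (by linarith : (0 : ℤ) ≤ p - 2) (by linarith : (0 : ℤ) ≤ p))
    hb.le
  have hx : x1 + 1 ∈ h.hv2.ideal (-(p * b1)) :=
    add_mem (h.hasVal_x1.mem h.hv2) (h.hv2.ideal_mono (by nlinarith) h.hv2.one_mem)
  obtain ⟨R, hR, hRe⟩ := h.hv2.exists_add_pow_prime h.prime hx (h.hasVal_ε.mem h.hv2)
    (M := 1) (by nlinarith)
    (by nlinarith)
  have hε' : ε ^ p / p ∈ h.hv2.ideal 1 := by
    rw [div_eq_mul_inv]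
    refine h.hv2.ideal_mono ?_ (h.hv2.mul_mem (h.hv2.pow_mem (h.hasVal_ε.mem h.hv2) p)
      ((h.hasVal_p'.inv h.hv2).mem h.hv2))
    have h3 := h.mul_b2_lt
    have h4 := mul_lt_mul_of_pos_left h.lt_b2 (by linarith : (0 : ℤ) < p)
    nlinarith [mul_pos (by linarith : (0 : ℤ) < p) hb]
  have hs := add_mem (add_mem hε' hR) h.δ_mem
  set s := ε ^ p / p + R + δ with hs'
  have h1 : σ x2 - x2 = (1 / (p : K2) + s) - (σ (x1 ^ p / p) - x1 ^ p / p) := by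
    rw [h.map_x2, map_div₀, map_pow, map_natCast, h.map_x1, hRe, hs']
    field_simp
    ring
  have h2 : (σ ^ p) x2 - x2 - 1 = ∑ i ∈ range p, (σ ^ i) s := by
    rw [pow_apply_sub, h1]
    simp only [map_sub (σ ^ _), map_add (σ ^ _) (1 / (p : K2)), sum_sub_distrib, sum_add_distrib]
    have h3 := pow_apply_sub σ (x1 ^ p / p) p
    simp only [map_sub (σ ^ _), sum_sub_distrib] at h3
    rw [← h3, map_div₀, map_pow, h.pow_apply_x1, map_natCast]
    simp [hp0]
  rw [h2]
  exact sum_mem fun i _ => h.map_mem _ hs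

/-- The automorphism `σ ^ p` translates `x2` by an element close to `1`. -/
theorem pow_apply_x2_sub_sub_mem (h : WittTower p v0 v2 e m b1 b2 a1 μ x1 x2 ε δ σ) :
    (σ ^ p) x2 - x2 - 1 ∈ h.hv2.ideal ((p : ℤ) ^ 2 * e - (p - 1) * (p ^ 2 * m + p * b1)) := by
  have hP := h.two_le
  have hb := h.b1_pos
  have hQ : 0 < (p : ℤ) ^ 2 * m + p * b1 := by
    have := mul_pos (by linarith : (0 : ℤ) < p) hb
    have := mul_pos (by positivity : (0 : ℤ) < p ^ 2) h.m_pos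
    linarith
  have h1 := h.pow_apply_x2_sub_sub_mem_one
  set η := (σ ^ p) x2 - x2 - 1 with hη
  rcases IsDiscVal.hasVal_or_zero v2 η with h3 | h3
  · exact Or.inl h3
  have hs := h3.le_of_mem h.hv2 h1
  refine Or.inr ?_
  by_contra! hlt
  have h2 : ((σ ^ p) x2) ^ p - (σ ^ p) x2 = x2 ^ p - x2 := by
    rw [← map_pow, ← map_sub, h.x2_eq, map_add, AlgEquiv.commutes, map_div₀, map_sub, map_add,
      map_pow, map_pow, map_pow, map_add, AlgEquiv.commutes, h.pow_apply_x1, map_natCast]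
  rw [show (σ ^ p) x2 = x2 + (1 + η) by rw [hη]; ring] at h2
  have hθ : 1 + η ∈ h.hv2.ideal 0 :=
    add_mem h.hv2.one_mem (h.hv2.ideal_mono (by norm_num) h1)
  obtain ⟨R, hR, hRe⟩ := h.hv2.exists_add_pow_prime h.prime (h.hasVal_x2.mem h.hv2)
    hθ (M := -((p - 1) * (p ^ 2 * m + p * b1))) (by nlinarith) (by nlinarith)
  obtain ⟨R', hR', hRe'⟩ := h.hv2.exists_add_pow_prime h.prime h.hv2.one_mem
    (h3.mem h.hv2) (M := v2 η) (by nlinarith) (by nlinarith)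
  refine h3.notMem h.hv2 (lt_add_one _) ?_
  have h4 : η = η ^ p + p * R' + p * R := by
    rw [one_pow] at hRe'
    linear_combination hRe + hRe' - h2
  have h5 : η ^ p + p * R' + p * R ∈ h.hv2.ideal (v2 η + 1) :=
    add_mem (add_mem (h.hv2.ideal_mono (by nlinarith) (h.hv2.pow_mem (h3.mem h.hv2) p))
      (h.hv2.ideal_mono (by linarith [h.e_pos']) (h.hv2.mul_mem (h.hasVal_p'.mem h.hv2) hR')))
      (h.hv2.ideal_mono (by linarith) (h.hv2.mul_mem (h.hasVal_p'.mem h.hv2) hR))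
  rwa [← h4] at h5

/-- The automorphism `σ ^ p` translates the modified second generator by an element
close to `1`. -/
theorem exists_pow_apply_sub (h : WittTower p v0 v2 e m b1 b2 a1 μ x1 x2 ε δ σ) :
    ∃ t : K2, t - 1 ∈ h.hv2.ideal (b2 + p * b1 + 1) ∧
      (σ ^ p) (x2 - algebraMap K0 K2 μ * x1) = x2 - algebraMap K0 K2 μ * x1 + t := by
  refine ⟨(σ ^ p) x2 - x2, h.hv2.ideal_mono h.le_errorBound h.pow_apply_x2_sub_sub_mem, ?_⟩
  rw [map_sub, map_mul, AlgEquiv.commutes, h.pow_apply_x1]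
  ring

end Galois

section Operators

/-- The operator `σ ^ p - 1`. -/
def diffOp (p : ℕ) (σ : K2 ≃ₐ[K0] K2) : Module.End K0 K2 :=
  ((σ ^ p).toLinearMap : Module.End K0 K2) - 1

/-- The truncated binomial power `(σ ^ p) ^ [μ]`. -/
def truncPow (p : ℕ) (σ : K2 ≃ₐ[K0] K2) (μ : K0) : Module.End K0 K2 :=
  ∑ i ∈ range p, binom μ i • diffOp p σ ^ i

/-- The operator `σ (σ ^ p) ^ [μ] - 1`. -/
def mixedOp (p : ℕ) (σ : K2 ≃ₐ[K0] K2) (μ : K0) : Module.End K0 K2 :=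
  (σ.toLinearMap : Module.End K0 K2) * truncPow p σ μ - 1

/-- The elements `binom X i * binom x1 j` with `X = x2 - μ x1`. -/
def monomial (p : ℕ) (μ : K0) (x1 x2 : K2) (i : Fin p × Fin p) : K2 :=
  binom (x2 - algebraMap K0 K2 μ * x1) i.1 * binom x1 i.2

/-- The valuation of `monomial`. -/
def monomialVal (p : ℕ) (b1 b2 : ℤ) (i : Fin p × Fin p) : ℤ :=
  -((i.1 : ℕ) * b2) + -((i.2 : ℕ) * (p * b1))

theorem diffOp_apply (p : ℕ) (σ : K2 ≃ₐ[K0] K2) (z : K2) : diffOp p σ z = (σ ^ p) z - z := rfl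

theorem diffOp_one (p : ℕ) (σ : K2 ≃ₐ[K0] K2) : diffOp p σ 1 = 0 := by
  rw [diffOp_apply, map_one, sub_self]

theorem truncPow_apply (p : ℕ) (σ : K2 ≃ₐ[K0] K2) (μ : K0) (z : K2) :
    truncPow p σ μ z = ∑ i ∈ range p, binom μ i • (diffOp p σ ^ i) z := by
  simp [truncPow]

theorem mixedOp_apply (p : ℕ) (σ : K2 ≃ₐ[K0] K2) (μ : K0) (z : K2) :
    mixedOp p σ μ z = σ (truncPow p σ μ z) - z := rfl

theorem diffOp_mul_of_fixed {y : K2} (hy : (σ ^ p) y = y) (z : K2) :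
    diffOp p σ (z * y) = diffOp p σ z * y := by
  rw [diffOp_apply, diffOp_apply, map_mul, hy, sub_mul]

theorem diffOp_pow_mul_of_fixed {y : K2} (hy : (σ ^ p) y = y) (k : ℕ) (z : K2) :
    (diffOp p σ ^ k) (z * y) = (diffOp p σ ^ k) z * y := by
  induction k with
  | zero => simp
  | succ k ih => rw [pow_succ', Module.End.mul_apply, ih, diffOp_mul_of_fixed hy,
      Module.End.mul_apply]

theorem truncPow_mul_of_fixed {y : K2} (hy : (σ ^ p) y = y) (z : K2) :
    truncPow p σ μ (z * y) = truncPow p σ μ z * y := by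
  simp only [truncPow_apply, diffOp_pow_mul_of_fixed hy, sum_mul, smul_mul_assoc]

theorem digits_eq (h : WittTower p v0 v2 e m b1 b2 a1 μ x1 x2 ε δ σ) {i j k l : ℕ} (hi : i < p)
    (hj : j < p) (hk : k < p) (hl : l < p)
    (hdvd : (p : ℤ) ^ 2 ∣ ((i + p * j : ℤ) - (k + p * l)) * b1) : i = k ∧ j = l := by
  have hp := Nat.prime_iff_prime_int.1 h.prime
  have hc : IsCoprime ((p : ℤ) ^ 2) b1 := (hp.coprime_iff_not_dvd.2 h.not_dvd).pow_left
  have h1 := hc.dvd_of_dvd_mul_right hdvd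
  have hi' : (i : ℤ) + 1 ≤ p := by exact_mod_cast hi
  have hj' : (j : ℤ) + 1 ≤ p := by exact_mod_cast hj
  have hk' : (k : ℤ) + 1 ≤ p := by exact_mod_cast hk
  have hl' : (l : ℤ) + 1 ≤ p := by exact_mod_cast hl
  have h2 := Int.eq_zero_of_abs_lt_dvd h1 (by rw [abs_lt]; constructor <;> nlinarith)
  have h3 : (p : ℤ) ∣ (i : ℤ) - k := ⟨l - j, by linarith⟩
  have h4 := Int.eq_zero_of_abs_lt_dvd h3 (by rw [abs_lt]; constructor <;> omega)
  have h5 : (p : ℤ) * (j - l) = 0 := by linarith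
  rcases mul_eq_zero.1 h5 with h6 | h6
  · have := h.prime.pos
    omega
  · exact ⟨by omega, by omega⟩

theorem hasVal_monomial (h : WittTower p v0 v2 e m b1 b2 a1 μ x1 x2 ε δ σ) (i : Fin p × Fin p) :
    HasVal v2 (monomial p μ x1 x2 i) (monomialVal p b1 b2 i) :=
  (HasVal.binom h.hv2 h.prime h.hasVal_p' h.e_pos' h.b2_pos h.hasVal_sub i.1.2).mul
    (HasVal.binom h.hv2 h.prime h.hasVal_p' h.e_pos'
      (mul_pos (by linarith [h.two_le]) h.b1_pos) h.hasVal_x1 i.2.2) h.hv2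

theorem monomialVal_inj (h : WittTower p v0 v2 e m b1 b2 a1 μ x1 x2 ε δ σ) (i j : Fin p × Fin p)
    (hij : ((p ^ 2 : ℕ) : ℤ) ∣ monomialVal p b1 b2 i - monomialVal p b1 b2 j) : i = j := by
  have h1 : (p : ℤ) ^ 2 ∣ (((i.1 : ℕ) + p * (i.2 : ℕ) : ℤ) - ((j.1 : ℕ) + p * (j.2 : ℕ))) * b1 := by
    obtain ⟨c, hc⟩ := hij
    rw [monomialVal, monomialVal, h.b2_eq] at hc
    push_cast at hc
    exact ⟨-c - m * ((i.1 : ℕ) - (j.1 : ℕ)), by linear_combination -hc⟩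
  obtain ⟨h2, h3⟩ := h.digits_eq i.1.2 i.2.2 j.1.2 j.2.2 h1
  exact Prod.ext (Fin.ext h2) (Fin.ext h3)

theorem card_digits (p : ℕ) : Fintype.card (Fin p × Fin p) = p ^ 2 := by
  rw [Fintype.card_prod, Fintype.card_fin, sq]

theorem exists_one_add_pow_eq (hv2 : IsDiscVal v2) (hp : p.Prime) {g : Module.End K0 K2} {N : ℤ}
    (hN : 0 ≤ N) (hg : g ∈ hv2.shift K0 N) :
    ∃ R ∈ hv2.shift K0 N, (1 + g) ^ p = 1 + g ^ p + p * R := by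
  have h0 := (Commute.one_left g).add_pow_prime_eq hp
  rw [one_pow, mul_one, mul_assoc] at h0
  refine ⟨_, ?_, h0⟩
  refine hv2.shift_mono (le_of_eq (add_zero N).symm) (hv2.shift_mul hg (sum_mem fun k _ => ?_))
  have h1 := hv2.shift_mul (hv2.shift_mul (hv2.shift_pow hv2.one_mem_shift (k - 1))
    (hv2.shift_pow hg (p - k - 1))) (hv2.natCast_mem_shift (K0 := K0)
      (hv2.natCast_mem (p.choose k / p)))
  refine hv2.shift_mono ?_ h1
  have : 0 ≤ ((p - k - 1 : ℕ) : ℤ) * N := by positivity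
  linarith

theorem toLinearMap_pow (σ : K2 ≃ₐ[K0] K2) (k : ℕ) :
    ((σ ^ k).toLinearMap : Module.End K0 K2) = σ.toLinearMap ^ k := by
  induction k with
  | zero => rfl
  | succ k ih => rw [pow_succ, pow_succ, ← ih]; rfl

theorem one_add_diffOp (p : ℕ) (σ : K2 ≃ₐ[K0] K2) :
    1 + diffOp p σ = (σ.toLinearMap : Module.End K0 K2) ^ p := by
  rw [diffOp, toLinearMap_pow, add_sub_cancel]

theorem one_add_mixedOp (p : ℕ) (σ : K2 ≃ₐ[K0] K2) (μ : K0) :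
    1 + mixedOp p σ μ = (σ.toLinearMap : Module.End K0 K2) * truncPow p σ μ := by
  rw [mixedOp, add_sub_cancel]

theorem commute_toLinearMap_diffOp (p : ℕ) (σ : K2 ≃ₐ[K0] K2) :
    Commute (σ.toLinearMap : Module.End K0 K2) (diffOp p σ) := by
  rw [diffOp, toLinearMap_pow]
  exact ((Commute.refl _).pow_right p).sub_right (Commute.one_right _)

theorem Commute.truncPow_right {f : Module.End K0 K2} (hf : Commute f (diffOp p σ)) (μ : K0) :
    Commute f (truncPow p σ μ) :=
  Commute.sum_right _ _ _ fun i _ => (hf.pow_right i).smul_right _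

theorem commute_diffOp_mixedOp (p : ℕ) (σ : K2 ≃ₐ[K0] K2) (μ : K0) :
    Commute (diffOp p σ) (mixedOp p σ μ) :=
  ((commute_toLinearMap_diffOp p σ).symm.mul_right
    (Commute.truncPow_right (Commute.refl _) μ)).sub_right (Commute.one_right _)

/-- The scaffold operators `Ψ ^ (a)`. -/
def scaffoldOp (p : ℕ) (σ : K2 ≃ₐ[K0] K2) (μ : K0) (a : ℕ) : Module.End K0 K2 :=
  if a < p ^ 2 then diffOp p σ ^ (a / p) * mixedOp p σ μ ^ (a % p) else 0

theorem scaffoldOp_of_lt (hp : 0 < p) {s t : ℕ} (hs : s < p) (ht : t < p) :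
    scaffoldOp p σ μ (t + p * s) = diffOp p σ ^ s * mixedOp p σ μ ^ t := by
  rw [scaffoldOp, if_pos (by nlinarith), Nat.add_mul_div_left _ _ hp, Nat.div_eq_of_lt ht,
    zero_add, Nat.add_mul_mod_self_left, Nat.mod_eq_of_lt ht]

theorem scaffoldOp_of_le {a : ℕ} (ha : p ^ 2 ≤ a) : scaffoldOp p σ μ a = 0 := by
  rw [scaffoldOp, if_neg (by omega)]

theorem scaffoldOp_mem_span (p : ℕ) (σ : K2 ≃ₐ[K0] K2) (μ : K0) (a : ℕ) :
    scaffoldOp p σ μ a ∈ Submodule.span K0 {f : Module.End K0 K2 |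
      ∃ τ : K2 ≃ₐ[K0] K2, f = (τ.toLinearMap : Module.End K0 K2)} := by
  have hS : (σ.toLinearMap : Module.End K0 K2) ∈
      Algebra.adjoin K0 {(σ.toLinearMap : Module.End K0 K2)} := Algebra.subset_adjoin rfl
  have hD : diffOp p σ ∈ Algebra.adjoin K0 {(σ.toLinearMap : Module.End K0 K2)} := by
    rw [diffOp, toLinearMap_pow]
    exact sub_mem (pow_mem hS p) (one_mem _)
  have hM : mixedOp p σ μ ∈ Algebra.adjoin K0 {(σ.toLinearMap : Module.End K0 K2)} :=
    sub_mem (mul_mem hS (sum_mem fun i _ => Subalgebra.smul_mem _ (pow_mem hD i) _)) (one_mem _)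
  have hU : scaffoldOp p σ μ a ∈ Algebra.adjoin K0 {(σ.toLinearMap : Module.End K0 K2)} := by
    rw [scaffoldOp]
    split_ifs
    · exact mul_mem (pow_mem hD _) (pow_mem hM _)
    · exact zero_mem _
  rw [← Subalgebra.mem_toSubmodule, Algebra.adjoin_eq_span] at hU
  refine Submodule.span_mono (fun f hf => ?_) hU
  obtain ⟨k, rfl⟩ := Submonoid.mem_closure_singleton.1 hf
  exact ⟨σ ^ k, (toLinearMap_pow σ k).symm⟩

/-- The valuation of `scaffoldOp p σ μ a ρ` for `ρ` of valuation `b2`. -/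
def scaffoldVal (p : ℕ) (b1 b2 : ℤ) (a : ℕ) : ℤ :=
  (1 + ((a / p : ℕ) : ℤ)) * b2 + ((a % p : ℕ) : ℤ) * p * b1

theorem scaffoldVal_inj (h : WittTower p v0 v2 e m b1 b2 a1 μ x1 x2 ε δ σ) {a b : ℕ}
    (ha : a < p ^ 2) (hb : b < p ^ 2)
    (hab : ((p ^ 2 : ℕ) : ℤ) ∣ scaffoldVal p b1 b2 a - scaffoldVal p b1 b2 b) : a = b := by
  obtain ⟨c, hc⟩ := hab
  rw [scaffoldVal, scaffoldVal, h.b2_eq] at hc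
  obtain ⟨h1, h2⟩ := h.digits_eq (i := a / p) (j := a % p) (k := b / p) (l := b % p)
    (Nat.div_lt_of_lt_mul (by rwa [← sq])) (Nat.mod_lt a h.prime.pos)
    (Nat.div_lt_of_lt_mul (by rwa [← sq])) (Nat.mod_lt b h.prime.pos)
    ⟨c - m * ((a / p : ℕ) - (b / p : ℕ)), by push_cast at hc ⊢; linear_combination hc⟩
  rw [← Nat.mod_add_div a p, ← Nat.mod_add_div b p, h1, h2]

variable [FiniteDimensional K0 K2]

theorem pow_apply_binom_x1 (h : WittTower p v0 v2 e m b1 b2 a1 μ x1 x2 ε δ σ) (j : ℕ) :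
    (σ ^ p) (binom x1 j) = binom x1 j := by
  have := map_binom ((σ ^ p : K2 ≃ₐ[K0] K2) : K2 →+* K2) x1 j
  simp only [RingHom.coe_coe] at this
  rw [this, h.pow_apply_x1]

theorem exists_diffOp_binom (h : WittTower p v0 v2 e m b1 b2 a1 μ x1 x2 ε δ σ) :
    ∃ t : K2, t - 1 ∈ h.hv2.ideal (b2 + p * b1 + 1) ∧ HasVal v2 t 0 ∧ ∀ i : ℕ,
      diffOp p σ (binom (x2 - algebraMap K0 K2 μ * x1) i) =
        binom (x2 - algebraMap K0 K2 μ * x1 + t) i - binom (x2 - algebraMap K0 K2 μ * x1) i := by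
  obtain ⟨t, ht, hX⟩ := h.exists_pow_apply_sub
  have hpos : 0 < b2 + p * b1 + 1 := by
    have := mul_pos (by linarith [h.two_le] : (0 : ℤ) < p) h.b1_pos
    linarith [h.b2_pos]
  refine ⟨t, ht, ?_, fun i => ?_⟩
  · have := (HasVal.one h.hv2).add_mem h.hv2 ht hpos
    rwa [add_sub_cancel] at this
  · have := map_binom ((σ ^ p : K2 ≃ₐ[K0] K2) : K2 →+* K2) (x2 - algebraMap K0 K2 μ * x1) i
    simp only [RingHom.coe_coe] at this
    rw [diffOp_apply, this, hX]

theorem mixedOp_monomial (h : WittTower p v0 v2 e m b1 b2 a1 μ x1 x2 ε δ σ) (i : Fin p × Fin p) :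
    mixedOp p σ μ (monomial p μ x1 x2 i) =
      binom (x2 - algebraMap K0 K2 μ * x1) i.1 * (binom (x1 + (1 + ε)) i.2 - binom x1 i.2) +
      (σ (truncPow p σ μ (binom (x2 - algebraMap K0 K2 μ * x1) i.1)) -
        binom (x2 - algebraMap K0 K2 μ * x1) i.1) * binom (x1 + (1 + ε)) i.2 := by
  have h2 := map_binom (σ : K2 →+* K2) x1 i.2
  simp only [RingHom.coe_coe] at h2
  rw [mixedOp_apply, monomial, truncPow_mul_of_fixed (h.pow_apply_binom_x1 _), map_mul, h2,
    h.map_x1, add_assoc]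
  ring

variable [CharZero K2]

theorem hasVal_diffOp_monomial (h : WittTower p v0 v2 e m b1 b2 a1 μ x1 x2 ε δ σ)
    {i : Fin p × Fin p} (hi : (i.1 : ℕ) ≠ 0) :
    HasVal v2 (diffOp p σ (monomial p μ x1 x2 i)) (monomialVal p b1 b2 i + b2) := by
  obtain ⟨t, -, ht, hX⟩ := h.exists_diffOp_binom
  rw [monomial, diffOp_mul_of_fixed (h.pow_apply_binom_x1 _), hX]
  exact ((HasVal.binom_add_sub h.hv2 h.prime h.hasVal_p' h.e_pos' h.b2_pos h.hasVal_sub ht hi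
    i.1.2).mul (HasVal.binom h.hv2 h.prime h.hasVal_p' h.e_pos'
      (mul_pos (by linarith [h.two_le]) h.b1_pos) h.hasVal_x1 i.2.2) h.hv2).congr
    (by rw [monomialVal]; ring)

theorem diffOp_mem_shift (h : WittTower p v0 v2 e m b1 b2 a1 μ x1 x2 ε δ σ) :
    diffOp p σ ∈ h.hv2.shift K0 b2 := by
  refine h.hv2.mem_shift_of_basis h.hv0 h.ram h.finrank (card_digits p) h.hasVal_monomial
    h.monomialVal_inj fun i => ?_
  by_cases hi : (i.1 : ℕ) = 0
  · refine Or.inl ?_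
    rw [monomial, hi, binom_zero_right, diffOp_mul_of_fixed (h.pow_apply_binom_x1 _), diffOp_one,
      zero_mul]
  · exact (h.hasVal_diffOp_monomial hi).mem h.hv2

theorem hasVal_diffOp (h : WittTower p v0 v2 e m b1 b2 a1 μ x1 x2 ε δ σ) {i : Fin p × Fin p}
    (hi : (i.1 : ℕ) ≠ 0) {z : K2} {M : ℤ} (hz : HasVal v2 z M)
    (hM : ((p ^ 2 : ℕ) : ℤ) ∣ M - monomialVal p b1 b2 i) : HasVal v2 (diffOp p σ z) (M + b2) :=
  HasVal.apply_of_basis h.hv2 h.ram h.finrank (card_digits p) h.hasVal_monomial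
    h.monomialVal_inj h.diffOp_mem_shift (h.hasVal_diffOp_monomial hi) hz hM

/-- On binomial coefficients of the modified second generator, `diffOp` is almost a difference
operator. -/
theorem diffOp_pow_binom_sub_mem (h : WittTower p v0 v2 e m b1 b2 a1 μ x1 x2 ε δ σ) {i : ℕ}
    (hi : i < p) (k : ℕ) :
    (diffOp p σ ^ k) (binom (x2 - algebraMap K0 K2 μ * x1) i) -
      (if k ≤ i then binom (x2 - algebraMap K0 K2 μ * x1) (i - k) else 0)
        ∈ h.hv2.ideal (b2 + p * b1 + 1 - (i - k) * b2) := by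
  obtain ⟨t, ht, -, hX⟩ := h.exists_diffOp_binom
  have hpos : 0 ≤ b2 + p * b1 + 1 := by
    have := mul_pos (by linarith [h.two_le] : (0 : ℤ) < p) h.b1_pos
    linarith [h.b2_pos]
  induction k with
  | zero => exact Or.inl (by simp)
  | succ k ih =>
    have h1 := h.hv2.shift_apply h.diffOp_mem_shift ih
    rw [map_sub, ← Module.End.mul_apply, ← pow_succ'] at h1
    have h2 : diffOp p σ (if k ≤ i then binom (x2 - algebraMap K0 K2 μ * x1) (i - k) else 0) -
        (if k + 1 ≤ i then binom (x2 - algebraMap K0 K2 μ * x1) (i - (k + 1)) else 0)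
          ∈ h.hv2.ideal (b2 + p * b1 + 1 - (i - (k + 1 : ℕ)) * b2) := by
      rcases lt_trichotomy k i with hk | rfl | hk
      · obtain ⟨l, rfl⟩ : ∃ l, i = k + 1 + l := ⟨i - (k + 1), by omega⟩
        rw [if_pos (by omega), if_pos (by omega), show k + 1 + l - k = l + 1 by omega,
          show k + 1 + l - (k + 1) = l by omega, hX]
        refine h.hv2.ideal_mono (le_of_eq (by push_cast; ring))
          (h.hv2.binom_add_sub_sub_mem h.prime h.hasVal_p' h.e_pos' h.b2_pos.le hpos
            (h.hasVal_sub.mem h.hv2) ht (by omega : l + 1 < p))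
      · refine Or.inl ?_
        rw [if_pos le_rfl, if_neg (by omega), Nat.sub_self, binom_zero_right, diffOp_one, sub_zero]
      · refine Or.inl ?_
        rw [if_neg (by omega), if_neg (by omega), map_zero, sub_zero]
    have h3 := add_mem (h.hv2.ideal_mono (le_of_eq (by push_cast; ring)) h1) h2
    rwa [sub_add_sub_cancel] at h3

theorem truncPow_binom_sub_mem (h : WittTower p v0 v2 e m b1 b2 a1 μ x1 x2 ε δ σ) {i : ℕ}
    (hi : i < p) :
    truncPow p σ μ (binom (x2 - algebraMap K0 K2 μ * x1) i) -
      binom (x2 - algebraMap K0 K2 μ * x1 + algebraMap K0 K2 μ) i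
        ∈ h.hv2.ideal (p * b1 + 1 - i * b2) := by
  have h1 : binom (x2 - algebraMap K0 K2 μ * x1 + algebraMap K0 K2 μ) i = ∑ k ∈ range p,
      binom μ k • (if k ≤ i then binom (x2 - algebraMap K0 K2 μ * x1) (i - k) else 0) := by
    rw [binom_add, ← sum_subset (range_subset_range.2 (by omega : i + 1 ≤ p))]
    · refine sum_congr rfl fun k hk => ?_
      rw [if_pos (by rw [mem_range] at hk; omega), Algebra.smul_def, map_binom]
    · intro k _ hk
      rw [if_neg (by rw [mem_range] at hk; omega), smul_zero]
  rw [truncPow_apply, h1, ← sum_sub_distrib]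
  refine sum_mem fun k hk => ?_
  rw [← smul_sub]
  refine h.hv2.ideal_mono ?_ (h.hv0.smul_mem h.hv2 h.ram (h.binom_μ_mem (mem_range.1 hk))
    (h.diffOp_pow_binom_sub_mem hi k))
  have h2 := h.b2_eq
  have h3 := h.b2_pos
  have h4 : 0 ≤ (k : ℤ) * b1 := mul_nonneg (by positivity) h.b1_pos.le
  have h5 : (k : ℤ) * b2 = k * (p ^ 2 * m + b1) := by rw [h2]
  push_cast
  nlinarith

theorem map_truncPow_binom_sub_mem (h : WittTower p v0 v2 e m b1 b2 a1 μ x1 x2 ε δ σ) {i : ℕ}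
    (hi : i < p) :
    σ (truncPow p σ μ (binom (x2 - algebraMap K0 K2 μ * x1) i)) -
      binom (x2 - algebraMap K0 K2 μ * x1) i ∈ h.hv2.ideal (p * b1 + 1 - i * b2) := by
  obtain ⟨g, hg, hX⟩ := h.exists_apply_add
  have hP := h.two_le
  have hG : 0 ≤ p * (p - 1) * b1 :=
    mul_nonneg (mul_nonneg (by linarith) (by linarith)) h.b1_pos.le
  have h0 := h.lt_b2
  have h3 : 0 < p * b1 := mul_pos (by linarith) h.b1_pos
  have h1 := h.map_mem σ (h.truncPow_binom_sub_mem hi)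
  have h2 := map_binom (σ : K2 →+* K2) (x2 - algebraMap K0 K2 μ * x1 + algebraMap K0 K2 μ) i
  simp only [RingHom.coe_coe] at h2
  rw [map_sub, h2, hX] at h1
  have h4 := add_mem h1 (h.hv2.ideal_mono (by nlinarith) (h.hv2.binom_add_sub_mem h.prime
    h.hasVal_p' h.e_pos' hG (by nlinarith) (h.hasVal_sub.mem h.hv2) hg hi))
  rwa [sub_add_sub_cancel] at h4

theorem mixedOp_monomial_error_mem (h : WittTower p v0 v2 e m b1 b2 a1 μ x1 x2 ε δ σ)
    (i : Fin p × Fin p) :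
    (σ (truncPow p σ μ (binom (x2 - algebraMap K0 K2 μ * x1) i.1)) -
        binom (x2 - algebraMap K0 K2 μ * x1) i.1) * binom (x1 + (1 + ε)) i.2
      ∈ h.hv2.ideal (monomialVal p b1 b2 i + p * b1 + 1) := by
  have h3 : 0 < p * b1 := mul_pos (by linarith [h.two_le]) h.b1_pos
  have h1 : x1 + (1 + ε) ∈ h.hv2.ideal (-(p * b1)) :=
    add_mem (h.hasVal_x1.mem h.hv2) (h.hv2.ideal_mono (by linarith) (h.hasVal_one_add_ε.mem h.hv2))
  refine h.hv2.ideal_mono (le_of_eq ?_) (h.hv2.mul_mem (h.map_truncPow_binom_sub_mem i.1.2)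
    (h.hv2.binom_mem h.prime h.hasVal_p' h.e_pos' h3.le h1 i.2.2))
  rw [monomialVal]
  ring

theorem hasVal_mixedOp_monomial (h : WittTower p v0 v2 e m b1 b2 a1 μ x1 x2 ε δ σ)
    {i : Fin p × Fin p} (hi : (i.2 : ℕ) ≠ 0) :
    HasVal v2 (mixedOp p σ μ (monomial p μ x1 x2 i)) (monomialVal p b1 b2 i + p * b1) := by
  have h3 : 0 < p * b1 := mul_pos (by linarith [h.two_le]) h.b1_pos
  have h4 := (HasVal.binom h.hv2 h.prime h.hasVal_p' h.e_pos' h.b2_pos h.hasVal_sub i.1.2).mul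
    (HasVal.binom_add_sub h.hv2 h.prime h.hasVal_p' h.e_pos' h3 h.hasVal_x1 h.hasVal_one_add_ε hi
      i.2.2) h.hv2
  rw [h.mixedOp_monomial]
  exact (h4.congr (by rw [monomialVal]; ring)).add_mem h.hv2 (h.mixedOp_monomial_error_mem i)
    (lt_add_one _)

theorem mixedOp_mem_shift (h : WittTower p v0 v2 e m b1 b2 a1 μ x1 x2 ε δ σ) :
    mixedOp p σ μ ∈ h.hv2.shift K0 (p * b1) := by
  refine h.hv2.mem_shift_of_basis h.hv0 h.ram h.finrank (card_digits p) h.hasVal_monomial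
    h.monomialVal_inj fun i => ?_
  by_cases hi : (i.2 : ℕ) = 0
  · rw [h.mixedOp_monomial, hi, binom_zero_right, binom_zero_right, sub_self, mul_zero, zero_add]
    have := h.mixedOp_monomial_error_mem i
    rw [hi, binom_zero_right] at this
    exact h.hv2.ideal_mono (by omega) this
  · exact (h.hasVal_mixedOp_monomial hi).mem h.hv2

theorem hasVal_mixedOp (h : WittTower p v0 v2 e m b1 b2 a1 μ x1 x2 ε δ σ) {i : Fin p × Fin p}
    (hi : (i.2 : ℕ) ≠ 0) {z : K2} {M : ℤ} (hz : HasVal v2 z M)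
    (hM : ((p ^ 2 : ℕ) : ℤ) ∣ M - monomialVal p b1 b2 i) :
    HasVal v2 (mixedOp p σ μ z) (M + p * b1) :=
  HasVal.apply_of_basis h.hv2 h.ram h.finrank (card_digits p) h.hasVal_monomial
    h.monomialVal_inj h.mixedOp_mem_shift (h.hasVal_mixedOp_monomial hi) hz hM

theorem hasVal_pow_mul_pow (h : WittTower p v0 v2 e m b1 b2 a1 μ x1 x2 ε δ σ) {ρ : K2}
    (hρ : HasVal v2 ρ b2) {s t : ℕ} (hs : s < p) (ht : t < p) :
    HasVal v2 ((diffOp p σ ^ s * mixedOp p σ μ ^ t) ρ) ((1 + s) * b2 + t * (p * b1)) := by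
  have hcong : ∀ i j : ℕ, i < p → j < p → ((p ^ 2 : ℕ) : ℤ) ∣ ((1 + i) * b2 + j * (p * b1)) -
      (-((p - 1 - i : ℕ) * b2) + -((p - 1 - j : ℕ) * (p * b1))) := by
    intro i j hi hj
    rw [Nat.sub_sub, Nat.sub_sub, Nat.cast_sub (by omega), Nat.cast_sub (by omega), h.b2_eq]
    exact ⟨p * m + b1, by push_cast; ring⟩
  have hmixed : HasVal v2 ((mixedOp p σ μ ^ t) ρ) (b2 + t * (p * b1)) := by
    clear hs
    induction t with
    | zero => simpa using hρ
    | succ t ih =>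
      rw [pow_succ', Module.End.mul_apply]
      refine (h.hasVal_mixedOp (i := (⟨p - 1, by omega⟩, ⟨p - 1 - t, by omega⟩))
        (show p - 1 - t ≠ 0 by omega) (ih (by omega)) ?_).congr (by push_cast; ring)
      simpa [monomialVal] using hcong 0 t (by omega) (by omega)
  rw [Module.End.mul_apply]
  induction s with
  | zero => simpa using hmixed
  | succ s ih =>
    rw [pow_succ', Module.End.mul_apply]
    refine (h.hasVal_diffOp (i := (⟨p - 1 - s, by omega⟩, ⟨p - 1 - t, by omega⟩))
      (show p - 1 - s ≠ 0 by omega) (ih (by omega)) ?_).congr (by push_cast; ring)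
    exact hcong s t (by omega) ht

theorem diffOp_pow_prime_mem_shift [IsGalois K0 K2]
    (h : WittTower p v0 v2 e m b1 b2 a1 μ x1 x2 ε δ σ) :
    diffOp p σ ^ p ∈ h.hv2.shift K0 ((p : ℤ) ^ 2 * e + b2) := by
  obtain ⟨R, hR, hpow⟩ := exists_one_add_pow_eq h.hv2 h.prime h.b2_pos.le h.diffOp_mem_shift
  have h1 : (σ.toLinearMap : Module.End K0 K2) ^ p ^ 2 = 1 := by
    rw [← toLinearMap_pow, ← h.finrank, ← IsGalois.card_aut_eq_finrank, pow_card_eq_one']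
    rfl
  rw [one_add_diffOp, ← pow_mul, ← sq, h1, add_assoc, left_eq_add, add_eq_zero_iff_eq_neg] at hpow
  rw [hpow]
  exact neg_mem (h.hv2.shift_mul (h.hv2.natCast_mem_shift (h.hasVal_p'.mem h.hv2)) hR)

theorem exists_truncPow_eq (h : WittTower p v0 v2 e m b1 b2 a1 μ x1 x2 ε δ σ) :
    ∃ κ ∈ h.hv2.shift K0 (-(p ^ 2 * m)), Commute (diffOp p σ) κ ∧
      truncPow p σ μ = 1 + diffOp p σ * κ := by
  refine ⟨∑ i ∈ range (p - 1), binom μ (i + 1) • diffOp p σ ^ i, sum_mem fun i hi => ?_,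
    Commute.sum_right _ _ _ fun i _ => ((Commute.refl _).pow_right i).smul_right _, ?_⟩
  · refine h.hv2.shift_mono ?_ (h.hv0.shift_smul h.hv2 h.ram
      (h.binom_μ_mem (k := i + 1) (by rw [mem_range] at hi; omega))
      (h.hv2.shift_pow h.diffOp_mem_shift i))
    have h1 : 0 ≤ (i : ℤ) * b1 := mul_nonneg (by positivity) h.b1_pos.le
    rw [h.b2_eq]
    push_cast
    linarith
  · rw [truncPow, show range p = range (p - 1 + 1) by rw [Nat.sub_add_cancel h.prime.one_le],
      sum_range_succ', pow_zero, binom_zero_right, one_smul, add_comm, mul_sum]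
    simp only [mul_smul_comm, pow_succ']

/-- The `p`-th power of `mixedOp` is `diffOp` up to an error shifting valuations by `2 * b2`. -/
theorem mixedOp_pow_sub_diffOp_mem_shift [IsGalois K0 K2]
    (h : WittTower p v0 v2 e m b1 b2 a1 μ x1 x2 ε δ σ) :
    mixedOp p σ μ ^ p - diffOp p σ ∈ h.hv2.shift K0 (2 * b2) := by
  have hP := h.two_le
  have hb1 := h.b1_pos
  have hb2 := h.b2_pos
  have hE := h.mul_b2_lt
  have hpb1 : 0 < p * b1 := mul_pos (by linarith) hb1
  have hpb2 : 2 * b2 ≤ p * b2 := by nlinarith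
  obtain ⟨κ, hκ, hcomm, htrunc⟩ := h.exists_truncPow_eq
  obtain ⟨A, hA, hApow⟩ := exists_one_add_pow_eq h.hv2 h.prime hpb1.le h.mixedOp_mem_shift
  have hτ : diffOp p σ * κ ∈ h.hv2.shift K0 b1 :=
    h.hv2.shift_mono (by linarith [h.b2_eq]) (h.hv2.shift_mul h.diffOp_mem_shift hκ)
  obtain ⟨B, hB, hBpow⟩ := exists_one_add_pow_eq h.hv2 h.prime hb1.le hτ
  have hp' : (p : Module.End K0 K2) ∈ h.hv2.shift K0 ((p : ℤ) ^ 2 * e) :=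
    h.hv2.natCast_mem_shift (h.hasVal_p'.mem h.hv2)
  have h1 : (diffOp p σ * κ) ^ p ∈ h.hv2.shift K0 (2 * b2) := by
    rw [hcomm.mul_pow]
    refine h.hv2.shift_mono ?_
      (h.hv2.shift_mul h.diffOp_pow_prime_mem_shift (h.hv2.shift_pow hκ p))
    have h2 : (p : ℤ) * b2 = p * (p ^ 2 * m + b1) := by rw [h.b2_eq]
    linarith [h.lt_e]
  have h2 : (diffOp p σ * κ) ^ p + p * B ∈ h.hv2.shift K0 (2 * b2) :=
    add_mem h1 (h.hv2.shift_mono (by linarith) (h.hv2.shift_mul hp' hB))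
  have h3 : p * A ∈ h.hv2.shift K0 (2 * b2) :=
    h.hv2.shift_mono (by linarith) (h.hv2.shift_mul hp' hA)
  have h4 : diffOp p σ * ((diffOp p σ * κ) ^ p + p * B) ∈ h.hv2.shift K0 (2 * b2) :=
    h.hv2.shift_mono (by linarith) (h.hv2.shift_mul h.diffOp_mem_shift h2)
  rw [one_add_mixedOp,
    (Commute.truncPow_right (commute_toLinearMap_diffOp p σ) μ).mul_pow, ← one_add_diffOp,
    htrunc, hBpow] at hApow
  have h5 : mixedOp p σ μ ^ p - diffOp p σ = (diffOp p σ * κ) ^ p + p * B +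
      diffOp p σ * ((diffOp p σ * κ) ^ p + p * B) - p * A := by
    have := sub_eq_zero.2 hApow
    rw [← sub_eq_zero, ← neg_eq_zero, ← this]
    noncomm_ring
  rw [h5]
  exact sub_mem (add_mem h2 h4) h3

theorem pow_mul_pow_mem_shift (h : WittTower p v0 v2 e m b1 b2 a1 μ x1 x2 ε δ σ) (s t : ℕ) :
    diffOp p σ ^ s * mixedOp p σ μ ^ t ∈ h.hv2.shift K0 (s * b2 + t * (p * b1)) :=
  h.hv2.shift_mul (h.hv2.shift_pow h.diffOp_mem_shift s)
    (h.hv2.shift_pow h.mixedOp_mem_shift t)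

theorem pow_mul_pow_sub_scaffoldOp_mem_shift_of_lt [IsGalois K0 K2]
    (h : WittTower p v0 v2 e m b1 b2 a1 μ x1 x2 ε δ σ) (s : ℕ) {t : ℕ} (ht : t < p) :
    diffOp p σ ^ s * mixedOp p σ μ ^ t - scaffoldOp p σ μ (t + p * s)
      ∈ h.hv2.shift K0 (s * b2 + t * (p * b1) + b2) := by
  rcases lt_or_ge s p with hs | hs
  · rw [scaffoldOp_of_lt h.prime.pos hs ht, sub_self]
    exact zero_mem _
  · obtain ⟨s, rfl⟩ := Nat.exists_eq_add_of_le hs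
    rw [scaffoldOp_of_le (by nlinarith), sub_zero, pow_add, mul_assoc]
    refine h.hv2.shift_mono ?_
      (h.hv2.shift_mul h.diffOp_pow_prime_mem_shift (h.pow_mul_pow_mem_shift s t))
    have hpb1 : 0 < p * b1 := mul_pos (by linarith [h.two_le]) h.b1_pos
    push_cast
    linarith [h.mul_b2_lt]

theorem pow_mul_pow_sub_scaffoldOp_mem_shift [IsGalois K0 K2]
    (h : WittTower p v0 v2 e m b1 b2 a1 μ x1 x2 ε δ σ) (s : ℕ) {t : ℕ} (ht : t < 2 * p) :
    diffOp p σ ^ s * mixedOp p σ μ ^ t - scaffoldOp p σ μ (t + p * s)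
      ∈ h.hv2.shift K0 (s * b2 + t * (p * b1) + b2) := by
  rcases lt_or_ge t p with htp | htp
  · exact h.pow_mul_pow_sub_scaffoldOp_mem_shift_of_lt s htp
  · obtain ⟨t, rfl⟩ := Nat.exists_eq_add_of_le htp
    have hb2 := h.lt_b2
    have h1 := h.hv2.shift_mul (h.pow_mul_pow_mem_shift s t) h.mixedOp_pow_sub_diffOp_mem_shift
    have h2 := h.pow_mul_pow_sub_scaffoldOp_mem_shift_of_lt (s + 1) (t := t) (by omega)
    have h3 : diffOp p σ ^ s * mixedOp p σ μ ^ (p + t) - scaffoldOp p σ μ (p + t + p * s) =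
        diffOp p σ ^ s * mixedOp p σ μ ^ t * (mixedOp p σ μ ^ p - diffOp p σ) +
        (diffOp p σ ^ (s + 1) * mixedOp p σ μ ^ t - scaffoldOp p σ μ (t + p * (s + 1))) := by
      rw [show p + t + p * s = t + p * (s + 1) by ring, mul_sub, mul_assoc, mul_assoc,
        ((commute_diffOp_mixedOp p σ μ).pow_right t).eq.symm, ← mul_assoc _ (diffOp p σ),
        ← pow_succ, ← pow_add, add_comm t p]
      abel
    rw [h3]
    refine add_mem (h.hv2.shift_mono ?_ h1) (h.hv2.shift_mono ?_ h2) <;> push_cast <;> nlinarith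

theorem scaffoldOp_mul_sub_mem_shift [IsGalois K0 K2]
    (h : WittTower p v0 v2 e m b1 b2 a1 μ x1 x2 ε δ σ) {j a : ℕ} (hj : j < p ^ 2) (ha : a < p ^ 2) :
    scaffoldOp p σ μ j * scaffoldOp p σ μ a - scaffoldOp p σ μ (j + a)
      ∈ h.hv2.shift K0 (((j / p : ℕ) + (a / p : ℕ)) * b2 +
        ((j % p : ℕ) + (a % p : ℕ)) * (p * b1) + b2) := by
  have hjm := Nat.mod_lt j h.prime.pos
  have ham := Nat.mod_lt a h.prime.pos
  have h1 := h.pow_mul_pow_sub_scaffoldOp_mem_shift (j / p + a / p) (t := j % p + a % p)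
    (by omega)
  have h2 : j % p + a % p + p * (j / p + a / p) = j + a := by
    have := Nat.mod_add_div j p
    have := Nat.mod_add_div a p
    rw [mul_add]
    omega
  have h3 : scaffoldOp p σ μ j * scaffoldOp p σ μ a =
      diffOp p σ ^ (j / p + a / p) * mixedOp p σ μ ^ (j % p + a % p) := by
    rw [scaffoldOp, scaffoldOp, if_pos hj, if_pos ha, pow_add, pow_add]
    exact ((commute_diffOp_mixedOp p σ μ).symm.pow_pow _ _).mul_mul_mul_comm _ _
  rw [h2, ← h3] at h1
  push_cast at h1
  exact h1

theorem hasVal_scaffoldOp (h : WittTower p v0 v2 e m b1 b2 a1 μ x1 x2 ε δ σ) {ρ : K2}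
    (hρ : HasVal v2 ρ b2) {a : ℕ} (ha : a < p ^ 2) :
    HasVal v2 (scaffoldOp p σ μ a ρ) (scaffoldVal p b1 b2 a) := by
  rw [scaffoldOp, if_pos ha]
  exact (h.hasVal_pow_mul_pow hρ (Nat.div_lt_of_lt_mul (by rwa [← sq]))
    (Nat.mod_lt a h.prime.pos)).congr (by rw [scaffoldVal]; ring)

theorem exists_eq_sum_scaffoldOp [IsGalois K0 K2]
    (h : WittTower p v0 v2 e m b1 b2 a1 μ x1 x2 ε δ σ) {ρ : K2} (hρ : HasVal v2 ρ b2)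
    {α : Module.End K0 K2} (hα : α ∈ Submodule.span K0 {f : Module.End K0 K2 |
      ∃ τ : K2 ≃ₐ[K0] K2, f = (τ.toLinearMap : Module.End K0 K2)}) :
    ∃ c : ℕ → K0, α = ∑ j ∈ range (p ^ 2), c j • scaffoldOp p σ μ j := by
  have hind : LinearIndependent K0 fun j : Fin (p ^ 2) => scaffoldOp p σ μ j := by
    refine LinearIndependent.of_comp (LinearMap.applyₗ ρ) ?_
    exact h.hv2.linearIndependent_of_val h.ram (fun j => h.hasVal_scaffoldOp hρ j.2)
      fun i j hij => Fin.ext (h.scaffoldVal_inj i.2 j.2 hij)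
  have hset : {f : Module.End K0 K2 | ∃ τ : K2 ≃ₐ[K0] K2,
      f = (τ.toLinearMap : Module.End K0 K2)} =
      Set.range fun τ : K2 ≃ₐ[K0] K2 => (τ.toLinearMap : Module.End K0 K2) := by
    ext f
    exact exists_congr fun _ => eq_comm
  have hle : Submodule.span K0 (Set.range fun j : Fin (p ^ 2) => scaffoldOp p σ μ j) ≤
      Submodule.span K0 {f : Module.End K0 K2 |
        ∃ τ : K2 ≃ₐ[K0] K2, f = (τ.toLinearMap : Module.End K0 K2)} := by
    rw [Submodule.span_le]
    rintro _ ⟨j, rfl⟩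
    exact scaffoldOp_mem_span p σ μ j
  have heq := Submodule.eq_of_le_of_finrank_le hle (by
    rw [finrank_span_eq_card hind, Fintype.card_fin, hset, ← h.finrank,
      ← IsGalois.card_aut_eq_finrank, Nat.card_eq_fintype_card]
    exact finrank_range_le_card _)
  rw [← heq, Submodule.mem_span_range_iff_exists_fun] at hα
  obtain ⟨c, hc⟩ := hα
  refine ⟨fun j => if hj : j < p ^ 2 then c ⟨j, hj⟩ else 0, ?_⟩
  rw [← hc, Finset.sum_range]
  exact sum_congr rfl fun j _ => by simp only [dif_pos j.2]

theorem isApproxScaffold [IsGalois K0 K2] (h : WittTower p v0 v2 e m b1 b2 a1 μ x1 x2 ε δ σ)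
    {ρ : K2} (hρ : HasVal v2 ρ b2) {d : ℕ → ℤ}
    (hd : ∀ a < p ^ 2, d a = scaffoldVal p b1 b2 a / (p : ℤ) ^ 2) :
    IsApproxScaffold h.hv2 (p ^ 2) (scaffoldOp p σ μ) ρ (scaffoldVal p b1 b2) d := by
  have hpos : 0 < p ^ 2 := pow_pos h.prime.pos 2
  have hpos' : (0 : ℤ) < (p : ℤ) ^ 2 := by exact_mod_cast hpos
  have hle : ∀ a < p ^ 2, ((p ^ 2 : ℕ) : ℤ) * d a ≤ scaffoldVal p b1 b2 a := fun a ha => by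
    rw [hd a ha]
    push_cast
    exact Int.mul_ediv_self_le hpos'.ne'
  have hlt : ∀ a < p ^ 2, scaffoldVal p b1 b2 a < ((p ^ 2 : ℕ) : ℤ) * d a + (p ^ 2 : ℕ) :=
    fun a ha => by
      rw [hd a ha]
      push_cast
      exact Int.lt_mul_ediv_self_add hpos'
  refine ⟨?_, fun a ha => scaffoldOp_of_le ha, fun a ha => h.hasVal_scaffoldOp hρ ha,
    fun a ha b hb => h.scaffoldVal_inj ha hb, hle, hlt, fun j hj a ha => ?_⟩
  · simp [scaffoldOp, hpos]
  · refine h.hv2.ideal_mono ?_ (h.hv2.shift_apply (h.scaffoldOp_mul_sub_mem_shift hj ha)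
      (hρ.mem h.hv2))
    have h1 := hle j hj
    have h2 := hle a ha
    have h3 : 1 ≤ d 0 := by
      rw [hd 0 hpos, Int.le_ediv_iff_mul_le hpos']
      have : (p : ℤ) ^ 2 * 1 ≤ p ^ 2 * b1 := mul_le_mul_of_nonneg_left h.b1_pos hpos'.le
      simp only [scaffoldVal, Nat.zero_div, Nat.zero_mod]
      push_cast
      linarith [h.lt_b2]
    have h4 : ((p ^ 2 : ℕ) : ℤ) * 1 ≤ (p ^ 2 : ℕ) * d 0 :=
      mul_le_mul_of_nonneg_left h3 (by positivity)
    rw [scaffoldVal] at h1 h2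
    linarith

end Operators

end WittTower

end Scaffold

/-- Theorem 4.5(b),(c): if `p²e₀ − (p+1)b₂ + (p−1)b₁ > 0` then
`𝔒₂` is free over the associated order `𝔄 = {α ∈ K₀[G] : α·𝔒₂ ⊆ 𝔒₂}`
(equivalently, `𝔒₂ = 𝔄·ν` for some `ν`, freeness for the associated order
being generation by a single element) if and only if `w_j = d_j − d₀` for all
`0 ≤ j ≤ p²−1`; and in that case `𝔒₂ = 𝔄·ρ₀`.  As before `K₀[G]` is realized
as the `K₀`-span of `G` inside `End_{K₀}(K₂)`. -/
theorem statement19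
    (p : ℕ) (hp : p.Prime)
    (K0 K2 : Type*) [Field K0] [Field K2] [CharZero K0] [CharZero K2]
    [Algebra K0 K2] [IsGalois K0 K2] [FiniteDimensional K0 K2]
    (hdeg : Module.finrank K0 K2 = p ^ 2)
    (hcyc : IsCyclic (K2 ≃ₐ[K0] K2))
    (v0 : K0 → ℤ) (v2 : K2 → ℤ)
    (hv0 : IsDiscVal v0) (hv2 : IsDiscVal v2)
    (e0 : ℤ) (he0 : e0 = v0 (p : K0)) (he0pos : 1 ≤ e0)
    (hram : ∀ x : K0, x ≠ 0 → v2 (algebraMap K0 K2 x) = (p : ℤ) ^ 2 * v0 x)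
    (a1 μ a2 : K0) (ha1 : a1 ≠ 0) (hμ0 : μ ≠ 0)
    (hwitt : ∀ y : K0, y ^ p - y ≠ a1)
    (hnd : ¬ ((p : ℤ) ∣ v0 a1))
    (hneg : v0 a1 < 0)
    (hbd : -((p : ℤ) * e0) < ((p : ℤ) ^ 2 - 1) * v0 a1)
    (m : ℤ) (hm : m = -v0 μ) (hmpos : 0 < m)
    (hmu1 : (p : ℤ) ^ 2 * (p - 1) * m - (2 * p * (p - 1) + 1) * v0 a1 < (p : ℤ) ^ 2 * e0)
    (hmu2 : -(((p : ℤ) ^ 2 - 1) * v0 a1) < (p : ℤ) ^ 2 * m)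
    (ha2 : a2 = μ ^ p * a1)
    (x1 x2 : K2)
    (hx1 : x1 ^ p - x1 = algebraMap K0 K2 a1)
    (hx2 : x2 ^ p - x2 = algebraMap K0 K2 a2 +
      (x1 ^ p + (algebraMap K0 K2 a1) ^ p - (x1 + algebraMap K0 K2 a1) ^ p) / (p : K2))
    (hgen : Algebra.adjoin K0 {x1, x2} = ⊤)
    (b1 b2 : ℤ) (hb1 : b1 = -v0 a1) (hb2 : b2 = (p : ℤ) ^ 2 * m + b1)
    (σ1 : K2 ≃ₐ[K0] K2) (ε δ' : K2)
    (hσ1x1 : σ1 x1 = x1 + 1 + ε)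
    (hε : ε ≠ 0) (hεv : v2 ε = (p : ℤ) ^ 2 * e0 - p * (p - 1) * b1)
    (hσ1x2 : σ1 x2 = x2 + (x1 ^ p + 1 - (x1 + 1) ^ p) / (p : K2) + δ')
    (hδ' : δ' = 0 ∨ 0 < v2 δ')
    (Ψ1 Ψ2 : Module.End K0 K2)
    (hΨ2 : Ψ2 = ((σ1 ^ p).toLinearMap : Module.End K0 K2) - 1)
    (hΨ1 : Ψ1 = (σ1.toLinearMap : Module.End K0 K2) *
      (∑ i ∈ Finset.range p,
        ((∏ k ∈ Finset.range i, (μ - (k : K0))) / (Nat.factorial i : K0)) • Ψ2 ^ i) - 1)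
    (π0 : K0) (hπ0 : π0 ≠ 0) (hπ0v : v0 π0 = 1)
    (ρ0 : K2) (hρ0 : ρ0 ≠ 0) (hρ0v : v2 ρ0 = b2 % (p : ℤ) ^ 2)
    (d : ℕ → ℤ)
    (hd : ∀ a : ℕ, a < p ^ 2 →
      d a = Int.fdiv ((1 + ((a / p : ℕ) : ℤ)) * b2 + ((a % p : ℕ) : ℤ) * (p : ℤ) * b1)
        ((p : ℤ) ^ 2))
    (Ψf : ℕ → Module.End K0 K2)
    (hΨf : ∀ a : ℕ, Ψf a = if a < p ^ 2 then Ψ2 ^ (a / p) * Ψ1 ^ (a % p) else 0)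
    (ρ : K2) (hρ : ρ = algebraMap K0 K2 (π0 ^ d 0) * ρ0)
    (ρf : ℕ → K2) (hρf : ∀ a : ℕ, ρf a = algebraMap K0 K2 (π0 ^ (-d a)) * Ψf a ρ)
    (wj : ℕ → ℤ)
    (hwj : ∀ j : ℕ, j < p ^ 2 →
      IsLeast {x : ℤ | ∃ a : ℕ, a < p ^ 2 - j ∧ x = d (j + a) - d a} (wj j))
    (hbig : 0 < (p : ℤ) ^ 2 * e0 - (p + 1) * b2 + (p - 1) * b1) :
    ((∃ ν : K2, (ν = 0 ∨ 0 ≤ v2 ν) ∧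
        ∀ z : K2, (z = 0 ∨ 0 ≤ v2 z) ↔
          ∃ α : Module.End K0 K2, (α ∈ Submodule.span K0
              {f : Module.End K0 K2 | ∃ σ : K2 ≃ₐ[K0] K2, f = (σ.toLinearMap : Module.End K0 K2)} ∧
            (∀ z : K2, (z = 0 ∨ 0 ≤ v2 z) → (α z = 0 ∨ 0 ≤ v2 (α z)))) ∧ α ν = z) ↔
      (∀ j : ℕ, j < p ^ 2 → wj j = d j - d 0)) ∧
    ((∀ j : ℕ, j < p ^ 2 → wj j = d j - d 0) →
      ∀ z : K2, (z = 0 ∨ 0 ≤ v2 z) ↔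
        ∃ α : Module.End K0 K2, (α ∈ Submodule.span K0
              {f : Module.End K0 K2 | ∃ σ : K2 ≃ₐ[K0] K2, f = (σ.toLinearMap : Module.End K0 K2)} ∧
            (∀ z : K2, (z = 0 ∨ 0 ≤ v2 z) → (α z = 0 ∨ 0 ≤ v2 (α z)))) ∧ α ρ0 = z) := by
  have h : WittTower p v0 v2 e0 m b1 b2 a1 μ x1 x2 ε δ' σ1 :=
    { prime := hp
      finrank := hdeg
      hv0 := hv0
      hv2 := hv2
      ram := fun x hx => by rw [hram x hx]; push_cast; ring
      hasVal_p := ⟨Nat.cast_ne_zero.2 hp.ne_zero, he0.symm⟩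
      hasVal_a1 := ⟨ha1, by rw [hb1, neg_neg]⟩
      hasVal_μ := ⟨hμ0, by rw [hm, neg_neg]⟩
      not_dvd := by rwa [hb1, dvd_neg]
      b1_pos := by omega
      m_pos := hmpos
      lt_m := by rw [hb1]; linarith
      b2_eq := hb2
      lt_e := by linarith
      x1_eq := hx1
      x2_eq := by rw [hx2, ha2]
      map_x1 := hσ1x1
      map_x2 := hσ1x2
      hasVal_ε := ⟨hε, hεv⟩
      δ_mem := hδ' }
  have hpos : (0 : ℤ) < (p : ℤ) ^ 2 := pow_pos (by exact_mod_cast hp.pos) 2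
  have hd' : ∀ a < p ^ 2, d a = WittTower.scaffoldVal p b1 b2 a / (p : ℤ) ^ 2 := fun a ha => by
    rw [hd a ha, Int.fdiv_eq_ediv_of_nonneg _ hpos.le, WittTower.scaffoldVal]
  have hd0 : d 0 = b2 / (p : ℤ) ^ 2 := by
    rw [hd' 0 (pow_pos hp.pos 2)]
    simp [WittTower.scaffoldVal]
  have hπ : HasVal v0 π0 1 := ⟨hπ0, hπ0v⟩
  have hρv : HasVal v2 ρ b2 := by
    rw [hρ]
    refine (((hπ.zpow hv0 (d 0)).algebraMap h.ram).mul ⟨hρ0, hρ0v⟩ hv2).congr ?_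
    rw [hd0]
    push_cast
    rw [mul_one, Int.mul_ediv_add_emod]
  have hρ0eq : π0 ^ (-d 0) • ρ = ρ0 := by
    rw [hρ, ← Algebra.smul_def, smul_smul, ← zpow_add₀ hπ0, neg_add_cancel, zpow_zero, one_smul]
  have hρ0mem : ρ0 ∈ hv2.ideal 0 := Or.inr (by rw [hρ0v]; exact Int.emod_nonneg _ hpos.ne')
  have hscaf := h.isApproxScaffold hρv hd'
  have hfree : (∀ j : ℕ, j < p ^ 2 → wj j = d j - d 0) →
      ∀ z : K2, (z = 0 ∨ 0 ≤ v2 z) ↔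
        ∃ α : Module.End K0 K2, (α ∈ Submodule.span K0
              {f : Module.End K0 K2 | ∃ σ : K2 ≃ₐ[K0] K2, f = (σ.toLinearMap : Module.End K0 K2)} ∧
            (∀ z : K2, (z = 0 ∨ 0 ≤ v2 z) → (α z = 0 ∨ 0 ≤ v2 (α z)))) ∧ α ρ0 = z := by
    refine fun hw z => ⟨fun hz => ?_, fun ⟨α, ⟨_, hα⟩, hz⟩ => hz ▸ hα ρ0 hρ0mem⟩
    obtain ⟨c, hc, hcz⟩ := hscaf.exists_apply_eq hv0 h.ram hdeg hπ hwj hw hz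
    rw [hρ0eq] at hcz
    exact ⟨_, ⟨sum_mem fun j _ => Submodule.smul_mem _ _
      (WittTower.scaffoldOp_mem_span p σ1 μ j), hc⟩, hcz⟩
  refine ⟨⟨fun ⟨ν, hν, hgenν⟩ => ?_, fun hw => ⟨ρ0, hρ0mem, hfree hw⟩⟩, hfree⟩
  refine hscaf.eq_sub_of_generates hv0 h.ram hdeg hπ hwj hν fun z hz => ?_
  obtain ⟨α, ⟨hαspan, hα⟩, hαz⟩ := (hgenν z).1 hz
  obtain ⟨c, rfl⟩ := h.exists_eq_sum_scaffoldOp hρv hαspan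
  exact ⟨c, hα, hαz⟩
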